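/- arXiv:1009.4652 — 2 statements merged into one kernel-verified Lean document; each statement's English description precedes it below -/
import Mathlib

section
/- Let β > 1 and j < 0. There exist ℓ_j ∈ (0, ∞) and continuous, strictly increasing functions m_j : (0, ℓ_j) → [m_β, 1) and h_j : (0, ℓ_j) → [0, ∞) such that for every x ∈ (0, ℓ_j) one has h_j(x) = ∫₀ˣ (−j)/χ(m_j(y)) dy and m_j(x) = tanh(β(m_j(x) + h_j(x))), and such that m_j(x) → 1 and h_j(x) → +∞ as x → ℓ_j⁻ (the solution on (−ℓ_j, 0) is obtained by odd reflection). Moreover ℓ_j → 0 as |j| → ∞ and ℓ_j → ∞ as j → 0. -/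
/-!
The equation is solvable by quadrature. On `[mβ, 1)` the constraint `m = tanh (β (m + h))` says
`h = H m` with `H m = artanh m / β - m`, and `H' m = 1 / χ(m) - 1`. Differentiating
`h = ∫ -j / χ(m)` turns the problem into `(1 - χ(m)) m' = -j`, whose left-hand side is the
derivative of the cubic polynomial
`G m = (1 - β) (m - mβ) + β (m³ - mβ³) / 3`; hence `G (m x) = -j x`.

The one quantitative input is `χ(mβ) < 1` (`chi_lt_one`), a consequence of
`t < sinh t ≤ sinh t cosh t` at `t = β mβ`. It makes `G` strictly increasing with nonvanishing
derivative on `[mβ, ∞)`, so that `G` has a continuous increasing inverse `σ`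
(`exists_inverse_stefanG`), and `m x = σ (-j x)`, `h x = H (m x)` solve the problem up to the point
`ℓ_j = G 1 / (-j)` where `m` reaches `1` and `H` blows up. Both limits of `ℓ_j` are read off from
this formula.
-/


open MeasureTheory Set Filter Topology

noncomputable section

/-- The Neumann reflection kernel of `J` on the interval `[a, b]`:
`J^neum(x,y) = Σ_z J(x - z)`, the sum running over the images `z` of `y` under
iterated reflections of `[a,b]` about its endpoints. -/
def Jneum (J : ℝ → ℝ) (a b x y : ℝ) : ℝ :=
  ∑' k : ℤ, (J (x - (y + 2 * (k : ℝ) * (b - a))) + J (x - (2 * a - y + 2 * (k : ℝ) * (b - a))))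

/-- Neumann convolution `(J^neum * f)(x) = ∫_a^b J^neum(x,y) f(y) dy`. -/
def convN (J : ℝ → ℝ) (a b : ℝ) (f : ℝ → ℝ) (x : ℝ) : ℝ :=
  ∫ y in a..b, Jneum J a b x y * f y

/-- the mobility `χ(m) = β (1 - m²)` -/
def chi (β m : ℝ) : ℝ := β * (1 - m ^ 2)

/-- odd (antisymmetric) function -/
def OddFn (f : ℝ → ℝ) : Prop := ∀ x, f (-x) = - f x

/-- `J` is a smooth, even probability density supported in `[-1,1]`. -/
def KernelJ (J : ℝ → ℝ) : Prop :=
  ContDiff ℝ (⊤ : ℕ∞) J ∧ (∀ x, J (-x) = J x) ∧ (∀ x, 0 ≤ J x) ∧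
    (∀ x, 1 < |x| → J x = 0) ∧ (∫ x, J x) = 1

/-- `p_{h,m}(x) = β / cosh²(β (J^neum*m)(x) + β h(x))` -/
def pfun (β : ℝ) (J : ℝ → ℝ) (a b : ℝ) (h m : ℝ → ℝ) (x : ℝ) : ℝ :=
  β / Real.cosh (β * convN J a b m x + β * h x) ^ 2

/-- `A_{h,m} ψ = p_{h,m} · (J^neum * ψ)` -/
def Aop (β : ℝ) (J : ℝ → ℝ) (a b : ℝ) (h m : ℝ → ℝ) (ψ : ℝ → ℝ) : ℝ → ℝ :=
  fun x => pfun β J a b h m x * convN J a b ψ x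

/-- maximal (Perron-Frobenius) eigenvalue / positive eigenvector pair of `A_{h,m}`
on `[a,b]`, normalized in `L²([a,b], p_{h,m}⁻¹ dx)`. -/
def MaxEigen (β : ℝ) (J : ℝ → ℝ) (a b : ℝ) (h m : ℝ → ℝ) (lam : ℝ) (u : ℝ → ℝ) : Prop :=
  (∀ x ∈ Icc a b, 0 < u x) ∧
  (∀ x ∈ Icc a b, Aop β J a b h m u x = lam * u x) ∧
  (∫ x in a..b, u x ^ 2 / pfun β J a b h m x) = 1 ∧
  (∀ (lam' : ℝ) (v : ℝ → ℝ) (C : ℝ), (∀ x ∈ Icc a b, |v x| ≤ C) →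
    (∃ x ∈ Icc a b, v x ≠ 0) →
    (∀ x ∈ Icc a b, Aop β J a b h m v x = lam' * v x) → lam' ≤ lam)

/-- the instanton `m̄` (with derivative `m̄' = mbar'`) and its properties. -/
def Instanton (β mβ cb ab : ℝ) (J mbar mbar' : ℝ → ℝ) : Prop :=
  OddFn mbar ∧ StrictMono mbar ∧ (∀ x, HasDerivAt mbar (mbar' x) x) ∧
  (∀ x, mbar x = Real.tanh (β * ∫ y, J (x - y) * mbar y)) ∧
  Tendsto mbar atTop (𝓝 mβ) ∧ Tendsto mbar atBot (𝓝 (-mβ)) ∧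
  (∀ x, 0 ≤ x → 0 < mβ - mbar x ∧ mβ - mbar x ≤ cb * Real.exp (-ab * x) ∧
    0 < mbar' x ∧ mbar' x ≤ cb * Real.exp (-ab * x))

/-- the operator `Ā ψ = β(1-m̄²)·(J*ψ)` on the whole line -/
def AbarOp (β : ℝ) (J mbar : ℝ → ℝ) : (ℝ → ℝ) → (ℝ → ℝ) :=
  fun ψ x => β * (1 - mbar x ^ 2) * ∫ y, J (x - y) * ψ y

/-- the macroscopic solution `u : [0,ℓ] → [m_β, 1)` with current `j` -/
def MacroSol (β mβ j ℓ : ℝ) (u : ℝ → ℝ) : Prop :=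
  (∃ b < (1:ℝ), ∀ r ∈ Icc (0:ℝ) ℓ, mβ ≤ u r ∧ u r ≤ b) ∧
  (∀ r ∈ Icc (0:ℝ) ℓ, u r = Real.tanh (β * (u r + ∫ y in (0:ℝ)..r, (-j) / chi β (u y))))

/-- Section 3 data at scale `ε`: `x_ε`, `ξ_ε = x_ε + 2n₀`, `m₀`, `h₀`. -/
def Sec3Data (β mβ ℓ ε : ℝ) (J mbar u m0 h0 : ℝ → ℝ) (xε ξε : ℝ) (n0 : ℕ) : Prop :=
  mbar xε = mβ - ε ∧ ξε = xε + 2 * n0 ∧ OddFn m0 ∧ OddFn h0 ∧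
  (∀ x ∈ Icc (0:ℝ) ξε, m0 x = mbar x) ∧
  (∀ x ∈ Ioc ξε (ℓ / ε), m0 x = u (ε * (x - ξε))) ∧
  (∀ x ∈ Icc (-(ℓ/ε)) (ℓ/ε),
    h0 x = (2*β)⁻¹ * Real.log ((1 + m0 x) / (1 - m0 x)) - convN J (-(ℓ/ε)) (ℓ/ε) m0 x)

/-- membership in the set `𝒜` (with its ε-independent parameters). -/
def MemA (β : ℝ) (J : ℝ → ℝ) (j x0 ε r a1 C1 c1 C2 c2 C0' : ℝ) (mbar : ℝ → ℝ)
    (h m : ℝ → ℝ) : Prop :=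
  (∀ x ∈ Icc (-ε⁻¹) ε⁻¹, m x = Real.tanh (β * convN J (-ε⁻¹) ε⁻¹ m x + β * h x)) ∧
  (∀ x ∈ Icc (-ε⁻¹) ε⁻¹, |h x| ≤ C2) ∧
  (∀ x ∈ Icc (-ε⁻¹) ε⁻¹, r ≤ |x - ε⁻¹ * x0| → β * (1 - m x ^ 2) ≤ Real.exp (-(2*a1))) ∧
  (∀ x ∈ Icc (-ε⁻¹) ε⁻¹, |x - ε⁻¹*x0| ≤ 2*C0'*Real.log ε⁻¹ →
    |m x - mbar (x - ε⁻¹*x0)| ≤ c1 * ε * Real.log ε⁻¹) ∧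
  ∃ m' h' : ℝ → ℝ, (∀ x, HasDerivAt m (m' x) x) ∧ (∀ x, HasDerivAt h (h' x) x) ∧
    (∀ x ∈ Icc (-ε⁻¹) ε⁻¹, |m' x| ≤ C1) ∧ (∀ x ∈ Icc (-ε⁻¹) ε⁻¹, |h' x| ≤ C2) ∧
    (∀ x ∈ Icc (-ε⁻¹) ε⁻¹, |x - ε⁻¹*x0| ≤ 2*C0'*Real.log ε⁻¹ →
      |h' x - (-(ε*j)) / (β * (1 - mbar (x - ε⁻¹*x0) ^ 2))| ≤ c2 * ε^2 * Real.log ε⁻¹)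

/-- the δ-ball of the set `𝒜` -/
def InBallA (β : ℝ) (J : ℝ → ℝ) (j x0 ε r a1 C1 c1 C2 c2 C0' : ℝ) (mbar : ℝ → ℝ)
    (δ : ℝ) (h m : ℝ → ℝ) : Prop :=
  ∃ h0 m0 : ℝ → ℝ, MemA β J j x0 ε r a1 C1 c1 C2 c2 C0' mbar h0 m0 ∧
    ∀ x ∈ Icc (-ε⁻¹) ε⁻¹, |h x - h0 x| ≤ δ ∧ |m x - m0 x| ≤ δ

/-- the weight `E_ε` in the norm `N` -/
def Efun (ε x0 a am x : ℝ) : ℝ :=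
  if ε⁻¹ * x0 ≤ x then Real.exp (a * (ε⁻¹ - x)) else Real.exp (am * (x + ε⁻¹))

/-- membership in the set `𝒢` -/
def MemG (x0 ε a am b0 : ℝ) (hε hεd ustar : ℝ → ℝ) (h : ℝ → ℝ) : Prop :=
  (∀ x ∈ Icc (-ε⁻¹) ε⁻¹, Efun ε x0 a am x * |h x - hε x| ≤ b0) ∧
  (∫ x in (-ε⁻¹)..ε⁻¹, h x * ustar x) = 0 ∧
  ∃ hd : ℝ → ℝ, (∀ x, HasDerivAt h (hd x) x) ∧
    (∀ x ∈ Icc (-ε⁻¹) ε⁻¹, |hd x - hεd x| ≤ ε) ∧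
    (∀ x ∈ Icc (-ε⁻¹) ε⁻¹, |x - ε⁻¹*x0| ≤ (Real.log ε⁻¹)^2 → |hd x - hεd x| ≤ ε^2)

/-- the antisymmetric solution `(h*, m*)` of Theorem 2.1 on `ε⁻¹[-1, ℓ*]`, `ℓ* = 1+2x₀`,
antisymmetric about `ε⁻¹ x₀`. -/
def StarSol (β j x0 ε : ℝ) (J hs ms : ℝ → ℝ) : Prop :=
  (∀ x ∈ Icc (-ε⁻¹) (ε⁻¹ * (1 + 2*x0)),
    ms x = Real.tanh (β * convN J (-ε⁻¹) (ε⁻¹ * (1 + 2*x0)) ms x + β * hs x) ∧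
    hs x = ∫ y in (ε⁻¹*x0)..x, (-(ε*j)) / chi β (ms y)) ∧
  (∀ x, ms (2*(ε⁻¹*x0) - x) = - ms x) ∧ (∀ x, hs (2*(ε⁻¹*x0) - x) = - hs x)

/-- the boundary correction `R_ε` -/
def Reps (J ms : ℝ → ℝ) (ε : ℝ) (x : ℝ) : ℝ :=
  ∫ y in ε⁻¹..(ε⁻¹+1), J (x - y) * (ms y - ms (2*ε⁻¹ - y))

end

/-- The primitive of `1 - χ` vanishing at `c`. -/
noncomputable def stefanG (β c m : ℝ) : ℝ := (1 - β) * (m - c) + β * (m ^ 3 - c ^ 3) / 3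

/-- The field `h` determined by `m = tanh (β (m + h))`, namely `artanh m / β - m`, written with
logarithms; meaningful for `-1 < m < 1`. -/
noncomputable def stefanH (β m : ℝ) : ℝ := (Real.log (1 + m) - Real.log (1 - m)) / (2 * β) - m

theorem chi_lt_one {β c : ℝ} (hβ : 1 < β) (hc : 0 < c) (h : c = Real.tanh (β * c)) :
    chi β c < 1 := by
  have ht : 0 < β * c := by positivity
  have hs := Real.self_lt_sinh_iff.2 ht
  have hch := Real.one_le_cosh (β * c)
  have hsq := Real.cosh_sq (β * c)
  have hc' : c * Real.cosh (β * c) = Real.sinh (β * c) := by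
    rw [Real.tanh_eq_sinh_div_cosh] at h
    have h0 : Real.cosh (β * c) ≠ 0 := (Real.cosh_pos _).ne'
    exact (eq_div_iff h0).1 h
  have hcc : (1 - c ^ 2) * Real.cosh (β * c) ^ 2 = 1 := by
    have : c ^ 2 * Real.cosh (β * c) ^ 2 = Real.sinh (β * c) ^ 2 := by rw [← hc']; ring
    linarith
  have hβc : β < Real.cosh (β * c) ^ 2 := by
    have h1 : c * β < c * Real.cosh (β * c) ^ 2 := by nlinarith
    exact lt_of_mul_lt_mul_left h1 hc.le
  have hpos : 0 < 1 - c ^ 2 := by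
    have : (0 : ℝ) < Real.cosh (β * c) ^ 2 := by positivity
    exact pos_of_mul_pos_left (by rw [hcc]; norm_num) this.le
  unfold chi
  nlinarith

theorem stefanG_hasDerivAt (β c m : ℝ) : HasDerivAt (stefanG β c) (1 - chi β m) m := by
  have h := (((hasDerivAt_id m).sub_const c).const_mul (1 - β)).add
    (((((hasDerivAt_id m).pow 3).sub_const (c ^ 3)).const_mul β).div_const 3)
  refine h.congr_deriv ?_
  simp [chi]
  ring

theorem stefanG_growth {β c a b : ℝ} (hβ : 1 < β) (hc : 0 < c) (ha : c ≤ a) (hab : a ≤ b) :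
    (1 - chi β c) * (b - a) ≤ stefanG β c b - stefanG β c a := by
  have h1 : stefanG β c b - stefanG β c a - (1 - chi β c) * (b - a)
      = (b - a) * (β * ((a ^ 2 - c ^ 2) + (a * b - c ^ 2) + (b ^ 2 - c ^ 2)) / 3) := by
    unfold stefanG chi; ring
  have h2 : 0 ≤ a ^ 2 - c ^ 2 := by nlinarith
  have h3 : 0 ≤ a * b - c ^ 2 := by nlinarith
  have h4 : 0 ≤ b ^ 2 - c ^ 2 := by nlinarith
  have h5 : 0 ≤ b - a := by linarith
  have : 0 ≤ (b - a) * (β * ((a ^ 2 - c ^ 2) + (a * b - c ^ 2) + (b ^ 2 - c ^ 2)) / 3) := by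
    positivity
  linarith

/-- The inverse of `stefanG β c` on `[c, ∞)`, extended to an increasing continuous function on the
whole line by inverting the extension of `stefanG β c` that has slope `1` on `(-∞, c]`. -/
theorem exists_inverse_stefanG {β c : ℝ} (hβ : 1 < β) (hc : 0 < c) (hχ : chi β c < 1) :
    ∃ σ : ℝ → ℝ, Continuous σ ∧ StrictMono σ ∧ (∀ m, c ≤ m → σ (stefanG β c m) = m) ∧
      ∀ y, 0 < y → HasDerivAt σ (1 - chi β (σ y))⁻¹ y := by
  set F : ℝ → ℝ := fun m => stefanG β c (max m c) + min (m - c) 0 with hF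
  have hGc : stefanG β c c = 0 := by simp [stefanG]
  have hGcont : Continuous (stefanG β c) := by unfold stefanG; fun_prop
  have hFG : ∀ m, c ≤ m → F m = stefanG β c m := fun m hm => by
    simp only [hF]; rw [max_eq_left hm, min_eq_right (by linarith), add_zero]
  have hFlin : ∀ m, m ≤ c → F m = m - c := fun m hm => by
    simp only [hF]; rw [max_eq_right hm, min_eq_left (by linarith), hGc, zero_add]
  have hFcont : Continuous F := by fun_prop
  have hFmono : StrictMono F := by
    intro a b hab
    rcases lt_or_ge a c with h | h
    · have h1 : min (a - c) 0 < min (b - c) 0 := by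
        rw [min_eq_left (by linarith)]
        exact lt_min (by linarith) (by linarith)
      have h2 := stefanG_growth hβ hc (le_max_right a c) (max_le_max_right c hab.le)
      have h3 : 0 ≤ (1 - chi β c) * (max b c - max a c) :=
        mul_nonneg (by linarith) (sub_nonneg.2 (max_le_max_right c hab.le))
      simp only [hF]
      linarith
    · rw [hFG a h, hFG b (h.trans hab.le)]
      have h2 := stefanG_growth hβ hc h hab.le
      have h3 : 0 < (1 - chi β c) * (b - a) := mul_pos (by linarith) (by linarith)
      linarith
  have hFsurj : Function.Surjective F := by
    refine hFcont.surjective ?_ ?_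
    · have h1 : Tendsto (fun m => (1 - chi β c) * (m - c)) atTop atTop :=
        (tendsto_atTop_add_const_right _ (-c) tendsto_id).const_mul_atTop (by linarith)
      refine tendsto_atTop_mono' _ ?_ h1
      filter_upwards [eventually_ge_atTop c] with m hm
      have := stefanG_growth hβ hc le_rfl hm
      rw [hFG m hm]
      linarith
    · have h1 : Tendsto (fun m : ℝ => m - c) atBot atBot :=
        tendsto_atBot_add_const_right _ (-c) tendsto_id
      refine h1.congr' ?_
      filter_upwards [eventually_le_atBot c] with m hm
      rw [hFlin m hm]
  set e : ℝ ≃o ℝ := hFmono.orderIsoOfSurjective F hFsurj with he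
  have heF : ∀ m, e m = F m := fun m => rfl
  have hσcont : Continuous e.symm := e.symm.continuous
  have hσG : ∀ m, c ≤ m → e.symm (stefanG β c m) = m := fun m hm => by
    rw [← hFG m hm, ← heF, e.symm_apply_apply]
  refine ⟨e.symm, hσcont, e.symm.strictMono, hσG, fun y hy => ?_⟩
  have hpos : c < e.symm y := by
    have := e.symm.strictMono hy
    rwa [← hGc, hσG c le_rfl] at this
  have hev : F =ᶠ[𝓝 (e.symm y)] stefanG β c := by
    filter_upwards [lt_mem_nhds hpos] with m hm using hFG m hm.le
  have hne : 1 - chi β (e.symm y) ≠ 0 := by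
    have : chi β (e.symm y) < chi β c := by
      unfold chi
      have hsq : c ^ 2 < e.symm y ^ 2 := by gcongr
      nlinarith
    linarith
  exact ((stefanG_hasDerivAt β c _).congr_of_eventuallyEq hev).of_local_left_inverse
    hσcont.continuousAt hne (Eventually.of_forall fun z => e.apply_symm_apply z)

theorem stefanH_hasDerivAt {β m : ℝ} (hβ : 1 < β) (h0 : 0 < m) (h1 : m < 1) :
    HasDerivAt (stefanH β) ((1 - chi β m) / chi β m) m := by
  have ha : (1 + m) ≠ 0 := by positivity
  have hb : (1 - m) ≠ 0 := by linarith
  have hβ0 : β ≠ 0 := by positivity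
  have hd : (1 - m ^ 2) ≠ 0 := by
    rw [show 1 - m ^ 2 = (1 + m) * (1 - m) by ring]; exact mul_ne_zero ha hb
  have h := (((((hasDerivAt_id m).const_add 1).log ha).sub
    (((hasDerivAt_id m).const_sub 1).log hb)).div_const (2 * β)).sub (hasDerivAt_id m)
  refine h.congr_deriv ?_
  simp only [chi, id]
  rw [show 1 - m ^ 2 = (1 + m) * (1 - m) by ring]
  field_simp
  ring

theorem stefanH_eq_artanh {β m : ℝ} (h0 : 0 < m) (h1 : m < 1) :
    stefanH β m = Real.artanh m / β - m := by
  have ha : (1 + m) ≠ 0 := by positivity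
  have hb : (1 - m) ≠ 0 := by linarith
  rw [Real.artanh_eq_half_log ⟨by linarith, h1.le⟩, Real.log_div ha hb]
  unfold stefanH
  ring

theorem stefanH_tendsto {β : ℝ} (hβ : 1 < β) : Tendsto (stefanH β) (𝓝[<] 1) atTop := by
  have h1 : Tendsto (fun m : ℝ => 1 - m) (𝓝[<] 1) (𝓝[>] 0) := by
    refine tendsto_nhdsWithin_iff.2 ⟨?_, ?_⟩
    · have : ContinuousAt (fun m : ℝ => 1 - m) 1 := by fun_prop
      simpa using this.tendsto.mono_left nhdsWithin_le_nhds
    · filter_upwards [self_mem_nhdsWithin] with m hm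
      exact sub_pos.2 (mem_Iio.1 hm)
  have h2 : Tendsto (fun m : ℝ => -Real.log (1 - m)) (𝓝[<] 1) atTop :=
    tendsto_neg_atBot_atTop.comp (Real.tendsto_log_nhdsGT_zero.comp h1)
  have h3 : Tendsto (fun m : ℝ => Real.log (1 + m) / (2 * β) - m) (𝓝[<] 1)
      (𝓝 (Real.log (1 + 1) / (2 * β) - 1)) := by
    have : ContinuousAt (fun m : ℝ => Real.log (1 + m) / (2 * β) - m) 1 := by
      refine ContinuousAt.sub (ContinuousAt.div_const (ContinuousAt.log ?_ ?_) _) ?_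
      · fun_prop
      · norm_num
      · fun_prop
    exact this.tendsto.mono_left nhdsWithin_le_nhds
  have h4 := (h2.atTop_div_const (show 0 < 2 * β by linarith)).atTop_add h3
  refine h4.congr fun m => ?_
  unfold stefanH
  ring

/-- the maximal solution of the stationary Stefan problem with current `j < 0`. -/
theorem stmt_0 (β mβ : ℝ) (hβ : 1 < β) (hmβpos : 0 < mβ)
    (hmβ : mβ = Real.tanh (β * mβ)) :
    ∃ L : ℝ → ℝ,
      (∀ j : ℝ, j < 0 →
        (0 < L j ∧
        ∃ m h : ℝ → ℝ,
          ContinuousOn m (Ioo 0 (L j)) ∧ ContinuousOn h (Ioo 0 (L j)) ∧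
          StrictMonoOn m (Ioo 0 (L j)) ∧ StrictMonoOn h (Ioo 0 (L j)) ∧
          (∀ x ∈ Ioo (0:ℝ) (L j),
            m x ∈ Ico mβ 1 ∧ 0 ≤ h x ∧
            h x = (∫ y in (0:ℝ)..x, (-j) / chi β (m y)) ∧
            m x = Real.tanh (β * (m x + h x))) ∧
          Tendsto m (𝓝[<] (L j)) (𝓝 1) ∧
          Tendsto h (𝓝[<] (L j)) atTop)) ∧
      Tendsto L atBot (𝓝 0) ∧ Tendsto L (𝓝[<] (0:ℝ)) atTop := by
  have hχ := chi_lt_one hβ hmβpos hmβ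
  have hc1 : mβ < 1 := by rw [hmβ]; exact Real.tanh_lt_one _
  obtain ⟨σ, hσc, hσm, hσG, hσd⟩ := exists_inverse_stefanG hβ hmβpos hχ
  have hG0 : stefanG β mβ mβ = 0 := by simp [stefanG]
  have hG1 : 0 < stefanG β mβ 1 := by
    have h1 := stefanG_growth hβ hmβpos le_rfl hc1.le
    have h2 : 0 < (1 - chi β mβ) * (1 - mβ) := mul_pos (by linarith) (by linarith)
    linarith
  have hσ0 : σ 0 = mβ := by rw [← hG0, hσG _ le_rfl]
  have hσ1 : σ (stefanG β mβ 1) = 1 := hσG _ hc1.le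
  refine ⟨fun j => stefanG β mβ 1 / (-j), fun j hj => ?_, ?_, ?_⟩
  · have hj' : 0 < -j := by linarith
    have hL : 0 < stefanG β mβ 1 / (-j) := div_pos hG1 hj'
    simp only
    set ℓ := stefanG β mβ 1 / (-j) with hℓ
    have hjℓ : -j * ℓ = stefanG β mβ 1 := mul_div_cancel₀ _ hj'.ne'
    set m : ℝ → ℝ := fun x => σ (-j * x) with hm
    have hmc : Continuous m := by fun_prop
    have hmm : StrictMono m := fun a b hab => hσm (mul_lt_mul_of_pos_left hab hj')
    have hm0 : m 0 = mβ := by simp [hm, hσ0]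
    have hmℓ : m ℓ = 1 := by simp only [hm]; rw [hjℓ, hσ1]
    have hmlow : ∀ x, 0 ≤ x → mβ ≤ m x := fun x hx => hm0 ▸ hmm.monotone hx
    have hmup : ∀ x, x < ℓ → m x < 1 := fun x hx => hmℓ ▸ hmm hx
    have hmpos : ∀ x, 0 ≤ x → 0 < m x := fun x hx => hmβpos.trans_le (hmlow x hx)
    have hχpos : ∀ x, 0 ≤ x → x < ℓ → 0 < chi β (m x) := fun x hx hx' => by
      have h1 := hmpos x hx
      have h2 := hmup x hx'
      unfold chi
      exact mul_pos (by linarith) (by nlinarith)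
    have hχlt : ∀ x, 0 ≤ x → chi β (m x) < 1 := fun x hx => by
      have h1 := hmlow x hx
      refine lt_of_le_of_lt ?_ hχ
      unfold chi
      have : mβ ^ 2 ≤ m x ^ 2 := by gcongr
      nlinarith
    have hmd : ∀ x, 0 < x → HasDerivAt m ((1 - chi β (m x))⁻¹ * -j) x := fun x hx => by
      have h1 : HasDerivAt (fun x : ℝ => -j * x) (-j) x := by
        simpa using (hasDerivAt_id x).const_mul (-j)
      exact (hσd _ (mul_pos hj' hx)).comp x h1
    set h : ℝ → ℝ := fun x => stefanH β (m x) with hh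
    have hhd : ∀ x, 0 < x → x < ℓ → HasDerivAt h (-j / chi β (m x)) x := fun x hx hx' => by
      have h1 := (stefanH_hasDerivAt hβ (hmpos x hx.le) (hmup x hx')).comp x (hmd x hx)
      refine h1.congr_deriv ?_
      have h2 : 1 - chi β (m x) ≠ 0 := by linarith [hχlt x hx.le]
      have h3 := (hχpos x hx.le hx').ne'
      field_simp
    have hhc : ContinuousOn h (Ico 0 ℓ) := fun x hx =>
      ((stefanH_hasDerivAt hβ (hmpos x hx.1) (hmup x hx.2)).continuousAt.comp
        hmc.continuousAt).continuousWithinAt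
    have hh0 : h 0 = 0 := by
      simp only [hh]
      rw [hm0, stefanH_eq_artanh hmβpos hc1]
      have : Real.artanh mβ = β * mβ := by
        conv_lhs => rw [hmβ]
        exact Real.artanh_tanh _
      rw [this]
      have : β ≠ 0 := by positivity
      field_simp
      simp
    have hhm : StrictMonoOn h (Ico 0 ℓ) := by
      refine strictMonoOn_of_deriv_pos (convex_Ico 0 ℓ) hhc fun x hx => ?_
      rw [interior_Ico] at hx
      rw [(hhd x hx.1 hx.2).deriv]
      exact div_pos hj' (hχpos x hx.1.le hx.2)
    refine ⟨hL, m, h, hmc.continuousOn, hhc.mono Ioo_subset_Ico_self, hmm.strictMonoOn _,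
      hhm.mono Ioo_subset_Ico_self, fun x hx => ⟨⟨hmlow x hx.1.le, hmup x hx.2⟩, ?_, ?_, ?_⟩,
      ?_, ?_⟩
    · rw [← hh0]
      exact (hhm ⟨le_rfl, hL⟩ ⟨hx.1.le, hx.2⟩ hx.1).le
    · have hsub : Icc 0 x ⊆ Ico 0 ℓ := fun y hy => ⟨hy.1, hy.2.trans_lt hx.2⟩
      rw [intervalIntegral.integral_eq_sub_of_hasDerivAt_of_le hx.1.le (hhc.mono hsub)
        (fun y hy => hhd y hy.1 (hy.2.trans hx.2)) ?_, hh0, sub_zero]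
      refine ContinuousOn.intervalIntegrable ?_
      rw [uIcc_of_le hx.1.le]
      refine continuousOn_const.div ?_ fun y hy => (hχpos y hy.1 (hsub hy).2).ne'
      unfold chi
      fun_prop
    · have h1 := hmpos x hx.1.le
      have h2 := hmup x hx.2
      have : β * (m x + h x) = Real.artanh (m x) := by
        simp only [hh]
        rw [stefanH_eq_artanh h1 h2]
        have : β ≠ 0 := by positivity
        field_simp
        ring
      rw [this, Real.tanh_artanh ⟨by linarith, h2⟩]
    · rw [← hmℓ]
      exact hmc.continuousAt.tendsto.mono_left nhdsWithin_le_nhds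
    · refine (stefanH_tendsto hβ).comp (tendsto_nhdsWithin_iff.2 ⟨?_, ?_⟩)
      · rw [← hmℓ]
        exact hmc.continuousAt.tendsto.mono_left nhdsWithin_le_nhds
      · filter_upwards [self_mem_nhdsWithin] with x hx using hmup x hx
  · exact tendsto_const_nhds.div_atTop tendsto_neg_atBot_atTop
  · have h1 : Tendsto (fun j : ℝ => -j) (𝓝[<] 0) (𝓝[>] 0) := by
      simpa using tendsto_neg_nhdsLT (a := (0 : ℝ))
    simp only [div_eq_mul_inv]
    exact (tendsto_inv_nhdsGT_zero.comp h1).const_mul_atTop hG1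
end

section
/- There is a constant c > 0 such that the following holds. Suppose there is n such that for all k < n, h_k = T^k(h₀) is well defined, ‖h_k − h₀‖ ≤ ε^a and ‖m_k − m₀‖ ≤ ε^a, where m_k is the auxiliary function in the definition of T(h_k). Then h_n is well defined and ‖h_{k+1} − h_k‖ ≤ c (1/2)^k ‖h₁ − h₀‖ for all k < n. -/
/-!
The proof compares successive iterates in the sup-norm with weight `e^{-Kε|x|}`, in which one step
of the iteration contracts by `1/2` once `K` is large.

*Linearization.* The operator `φ ↦ χ(m₀) · (J^neum * φ)` has an `n₀`-th power that contracts odd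
functions (`Profile.core`). At distance more than `n₀` inside the glueing point its iterates are
those of the linearization at the instanton on the whole line, which contract by the choice of
`n₀`; further out `|m₀| ≥ m_β - ε`, so that `χ(m₀)` itself is bounded by a constant below `1`.

*Lipschitz dependence.* Hence auxiliary functions close to `m₀` depend in a Lipschitz way on the
field. This persists in the weighted norm (`Core.weighted`), because the weight changes by the
factor `e^{Kε}` only over the range of the kernel.

*Gain from integration.* The map `T` integrates `-εj / χ(m)`, and integration against
the weight `e^{-Kε|x|}` gains `1/(Kε)` (`T_weighted`). The factors `ε` cancel, and `K` can be chosen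
so that the composition contracts by `1/2` (`Orbit.contract`). On `Λ` the weight lies between
`e^{-Kℓ}` and `1`, which gives the sup-norm estimate with `c = e^{Kℓ}` (`remove_wt`).

*Existence of the auxiliary function of `h_n`.* `T` maps every profile within `ε^a` of `m₀` into a
small neighbourhood of `h₀` (`Profile.T_close`): the interface region has macroscopic width
`ε ξ_ε = O(√ε)`, and beyond it `h₀` is close to the macroscopic field. Near `h₀` the fixed point
equation is solved by Picard iteration from `m₀` (`exists_aux`).

Measurability of `u` and of the `m_k` follows from the equations they satisfy (`profile_reg`,
`Orbit.adm`).
-/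

open MeasureTheory Set Filter Topology

/-! ### The Neumann kernel and its convolution -/

/-- The Neumann kernel on `[-L, L]` for `2L > 1`: only the identity and the two first reflections
about the endpoints contribute. -/
noncomputable def K3 (J : ℝ → ℝ) (L x y : ℝ) : ℝ :=
  J (x - y) + J (x + y + 2 * L) + J (x + y - 2 * L)

/-- Neumann convolution on `[-L, L]`, written with `K3` and a set integral. -/
noncomputable def cv (J : ℝ → ℝ) (L : ℝ) (f : ℝ → ℝ) (x : ℝ) : ℝ :=
  ∫ y in Icc (-L) L, K3 J L x y * f y

/-- `f` is bounded by `M` in the sup-norm on `[-L, L]`. -/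
def Bd (L : ℝ) (f : ℝ → ℝ) (M : ℝ) : Prop := ∀ x ∈ Icc (-L) L, |f x| ≤ M

/-- `f` is odd and almost everywhere measurable on `[-L, L]`. -/
def Adm (L : ℝ) (f : ℝ → ℝ) : Prop := OddFn f ∧ AEMeasurable f (volume.restrict (Icc (-L) L))

section kernel
variable {J : ℝ → ℝ} {L : ℝ}

lemma KernelJ.cont (hJ : KernelJ J) : Continuous J := hJ.1.continuous

lemma KernelJ.compactSupp (hJ : KernelJ J) : HasCompactSupport J := by
  refine HasCompactSupport.intro (isCompact_Icc (a := (-1:ℝ)) (b := 1)) fun x hx => ?_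
  refine hJ.2.2.2.1 x ?_
  by_contra h
  exact hx (abs_le.1 (not_lt.1 h))

lemma KernelJ.bdd (hJ : KernelJ J) : ∃ B, ∀ x, |J x| ≤ B :=
  hJ.cont.bounded_above_of_compact_support hJ.compactSupp

lemma KernelJ.integrable (hJ : KernelJ J) : Integrable J :=
  hJ.cont.integrable_of_hasCompactSupport hJ.compactSupp

lemma K3_nonneg (hJ : KernelJ J) (x y : ℝ) : 0 ≤ K3 J L x y := by
  have h := hJ.2.2.1
  unfold K3
  linarith [h (x - y), h (x + y + 2 * L), h (x + y - 2 * L)]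

lemma K3_cont (hJ : KernelJ J) : Continuous fun p : ℝ × ℝ => K3 J L p.1 p.2 := by
  have := hJ.cont
  unfold K3
  fun_prop

lemma K3_bdd (hJ : KernelJ J) : ∃ B, ∀ x y, |K3 J L x y| ≤ B := by
  obtain ⟨B, hB⟩ := hJ.bdd
  refine ⟨B + B + B, fun x y => ?_⟩
  unfold K3
  exact (abs_add_three _ _ _).trans (by gcongr <;> apply hB)

lemma K3_neg (hJ : KernelJ J) (x y : ℝ) : K3 J L (-x) (-y) = K3 J L x y := by
  have h := hJ.2.1
  unfold K3
  rw [← h (-x - -y), ← h (-x + -y + 2 * L), ← h (-x + -y - 2 * L)]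
  ring_nf

/-- The kernel has range one, also after folding the reflected points back. -/
lemma K3_supp (hJ : KernelJ J) (hL : 1 ≤ L) {x y : ℝ} (hx : x ∈ Icc (-L) L)
    (hy : y ∈ Icc (-L) L) (h : K3 J L x y ≠ 0) : |(|x| - |y|)| ≤ 1 ∧ (1 < x → 0 ≤ y) := by
  have h0 := hJ.2.2.2.1
  obtain ⟨hx1, hx2⟩ := hx
  obtain ⟨hy1, hy2⟩ := hy
  by_cases h1 : |x - y| ≤ 1
  · refine ⟨(abs_abs_sub_abs_le x y).trans h1, fun hx => ?_⟩
    linarith [(abs_le.1 h1).2]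
  by_cases h2 : |x + y + 2 * L| ≤ 1
  · have := abs_le.1 h2
    refine ⟨?_, fun hx => by linarith⟩
    rw [abs_of_nonpos (by linarith : x ≤ 0), abs_of_nonpos (by linarith : y ≤ 0), abs_le]
    constructor <;> linarith
  by_cases h3 : |x + y - 2 * L| ≤ 1
  · have := abs_le.1 h3
    refine ⟨?_, fun hx => by linarith⟩
    rw [abs_of_nonneg (by linarith : 0 ≤ x), abs_of_nonneg (by linarith : 0 ≤ y), abs_le]
    constructor <;> linarith
  · exact absurd (by unfold K3; rw [h0 _ (not_le.1 h1), h0 _ (not_le.1 h2), h0 _ (not_le.1 h3)]; simp) h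

lemma K3_near (hJ : KernelJ J) {x y : ℝ} (hx : |x| < L - 1)
    (hy : y ∈ Icc (-L) L) : K3 J L x y = J (x - y) := by
  have h0 := hJ.2.2.2.1
  have := abs_lt.1 hx
  unfold K3
  rw [h0 (x + y + 2 * L) (by rw [lt_abs]; left; linarith [hy.1]),
    h0 (x + y - 2 * L) (by rw [lt_abs]; right; linarith [hy.2])]
  simp

lemma K3_int (hJ : KernelJ J) (hL : 1 ≤ L) {x : ℝ} (hx : x ∈ Icc (-L) L) :
    ∫ y in Icc (-L) L, K3 J L x y = 1 := by
  have hc := hJ.cont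
  have hii : ∀ a b, IntervalIntegrable J volume a b := fun a b => hc.intervalIntegrable a b
  obtain ⟨hx1, hx2⟩ := hx
  rw [integral_Icc_eq_integral_Ioc, ← intervalIntegral.integral_of_le (by linarith)]
  unfold K3
  rw [intervalIntegral.integral_add, intervalIntegral.integral_add]
  · have e1 : ∫ y in (-L)..L, J (x - y) = ∫ t in (x - L)..(x + L), J t := by
      rw [intervalIntegral.integral_comp_sub_left (fun t => J t)]; ring_nf
    have e2 : ∫ y in (-L)..L, J (x + y + 2 * L) = ∫ t in (x + L)..(x + 3 * L), J t := by
      have : ∀ y, x + y + 2 * L = y + (x + 2 * L) := fun y => by ring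
      simp only [this]
      rw [intervalIntegral.integral_comp_add_right (fun t => J t)]; ring_nf
    have e3 : ∫ y in (-L)..L, J (x + y - 2 * L) = ∫ t in (x - 3 * L)..(x - L), J t := by
      have : ∀ y, x + y - 2 * L = y + (x - 2 * L) := fun y => by ring
      simp only [this]
      rw [intervalIntegral.integral_comp_add_right (fun t => J t)]; ring_nf
    rw [e1, e2, e3, intervalIntegral.integral_add_adjacent_intervals (hii _ _) (hii _ _), add_comm,
      intervalIntegral.integral_add_adjacent_intervals (hii _ _) (hii _ _),
      intervalIntegral.integral_of_le (by linarith),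
      setIntegral_eq_integral_of_ae_compl_eq_zero, hJ.2.2.2.2]
    -- the endpoints `±1` are possible only up to the null set removed here
    filter_upwards [compl_mem_ae_iff.2 (measure_singleton (-1:ℝ))] with t ht hnt
    refine hJ.2.2.2.1 t (lt_of_not_ge fun h => hnt ?_)
    have := abs_le.1 h
    exact ⟨lt_of_le_of_ne (by linarith) (fun h' => ht (by simp; linarith)), by linarith⟩
  all_goals apply Continuous.intervalIntegrable; fun_prop

lemma convN_eq_cv (hJ : KernelJ J) (hL : 1 ≤ L) {x : ℝ} (hx : x ∈ Icc (-L) L) (f : ℝ → ℝ) :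
    convN J (-L) L f x = cv J L f x := by
  have h0 := hJ.2.2.2.1
  obtain ⟨hx1, hx2⟩ := hx
  unfold convN cv
  rw [intervalIntegral.integral_of_le (by linarith), integral_Icc_eq_integral_Ioc]
  refine setIntegral_congr_fun measurableSet_Ioc fun y hy => ?_
  obtain ⟨hy1, hy2⟩ := hy
  congr 1
  unfold Jneum K3
  rw [tsum_eq_sum (s := {0, 1})]
  · rw [Finset.sum_pair (by norm_num)]
    have : J (x - (y + 2 * ((1:ℤ):ℝ) * (L - -L))) = 0 := by
      apply h0; rw [lt_abs]; right; push_cast; linarith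
    rw [this]
    push_cast
    ring_nf
  · intro k hk
    have hk' : k ≤ -1 ∨ 2 ≤ k := by
      simp at hk
      omega
    rcases hk' with hk' | hk'
    · have hk2 : (k:ℝ) ≤ -1 := by exact_mod_cast hk'
      have : (k:ℝ) * L ≤ -1 * L := by gcongr
      rw [h0, h0]
      · simp
      · rw [lt_abs]; left; linarith
      · rw [lt_abs]; left; linarith
    · have hk2 : (2:ℝ) ≤ k := by exact_mod_cast hk'
      have : 2 * L ≤ (k:ℝ) * L := by gcongr
      rw [h0, h0]
      · simp
      · rw [lt_abs]; right; linarith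
      · rw [lt_abs]; right; linarith

lemma K3_integrable (hJ : KernelJ J) (x : ℝ) : IntegrableOn (K3 J L x) (Icc (-L) L) := by
  have := K3_cont (L := L) hJ
  exact (this.comp (by fun_prop : Continuous fun y : ℝ => (x, y))).continuousOn.integrableOn_Icc

lemma cv_bound (hJ : KernelJ J) (hL : 1 ≤ L) {x : ℝ} (hx : x ∈ Icc (-L) L) {f : ℝ → ℝ} {M : ℝ}
    (h : ∀ y ∈ Icc (-L) L, K3 J L x y ≠ 0 → |f y| ≤ M) : |cv J L f x| ≤ M := by
  have key : ‖cv J L f x‖ ≤ ∫ y in Icc (-L) L, K3 J L x y * M := by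
    refine norm_integral_le_of_norm_le ((K3_integrable hJ x).mul_const M) ?_
    refine (ae_restrict_iff' measurableSet_Icc).2 (Eventually.of_forall fun y hy => ?_)
    rw [Real.norm_eq_abs, abs_mul, abs_of_nonneg (K3_nonneg hJ x y)]
    by_cases h0 : K3 J L x y = 0
    · simp [h0]
    · exact mul_le_mul_of_nonneg_left (h y hy h0) (K3_nonneg hJ x y)
  rw [integral_mul_const, K3_int hJ hL hx, one_mul] at key
  exact key

lemma cv_bound' (hJ : KernelJ J) (hL : 1 ≤ L) {x : ℝ} (hx : x ∈ Icc (-L) L) {f : ℝ → ℝ} {M : ℝ}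
    (h : Bd L f M) : |cv J L f x| ≤ M :=
  cv_bound hJ hL hx fun y hy _ => h y hy

lemma cv_integrable (hJ : KernelJ J) (x : ℝ) {f : ℝ → ℝ} {M : ℝ}
    (hf : AEMeasurable f (volume.restrict (Icc (-L) L))) (hb : Bd L f M) :
    IntegrableOn (fun y => K3 J L x y * f y) (Icc (-L) L) := by
  refine Integrable.mul_bdd (c := M) (K3_integrable hJ x) hf.aestronglyMeasurable ?_
  exact (ae_restrict_iff' measurableSet_Icc).2 (Eventually.of_forall hb)

lemma cv_sub (hJ : KernelJ J) (x : ℝ) {f g : ℝ → ℝ} {M N : ℝ}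
    (hf : AEMeasurable f (volume.restrict (Icc (-L) L))) (hfb : Bd L f M)
    (hg : AEMeasurable g (volume.restrict (Icc (-L) L))) (hgb : Bd L g N) :
    cv J L (fun y => f y - g y) x = cv J L f x - cv J L g x := by
  unfold cv
  rw [← integral_sub (cv_integrable hJ x hf hfb) (cv_integrable hJ x hg hgb)]
  congr 1; ext y; ring

lemma cv_odd (hJ : KernelJ J) {f : ℝ → ℝ} (hf : OddFn f) : OddFn (cv J L f) := by
  intro x
  unfold cv
  have h1 : ∀ g : ℝ → ℝ, ∫ y in Icc (-L) L, g (-y) = ∫ y in Icc (-L) L, g y := by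
    intro g
    rw [← integral_indicator measurableSet_Icc, ← integral_indicator measurableSet_Icc,
      ← integral_neg_eq_self (indicator (Icc (-L) L) g)]
    congr 1; ext y
    simp only [indicator, mem_Icc]
    congr 1
    simp only [eq_iff_iff]
    constructor <;> rintro ⟨h1, h2⟩ <;> constructor <;> linarith
  rw [← h1, ← integral_neg]
  congr 1; ext y
  rw [K3_neg hJ, hf y]; ring

/-- No measurability of `f` is needed: the set of `x` for which the integrand is a.e. measurable is
closed, the convolution is continuous on it and takes the junk value `0` off it. -/
lemma cv_measurable (hJ : KernelJ J) {f : ℝ → ℝ} {M : ℝ} (hb : Bd L f M) :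
    Measurable (cv J L f) := by
  classical
  set μ := volume.restrict (Icc (-L) L)
  obtain ⟨B, hB⟩ := K3_bdd (L := L) hJ
  have hKc := K3_cont (L := L) hJ
  set S : Set ℝ := {x | AEMeasurable (fun y => K3 J L x y * f y) μ} with hS
  have hSc : IsClosed S := by
    refine IsSeqClosed.isClosed fun xs x hxs hlim => ?_
    refine aemeasurable_of_tendsto_metrizable_ae' hxs (Eventually.of_forall fun y => ?_)
    have : Tendsto (fun n => K3 J L (xs n) y) atTop (𝓝 (K3 J L x y)) :=
      ((hKc.comp (by fun_prop : Continuous fun x : ℝ => (x, y))).tendsto x).comp hlim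
    exact this.mul_const _
  have hcont : ContinuousOn (cv J L f) S := by
    refine continuousOn_of_dominated (bound := fun _ => B * M)
      (fun x hx => AEMeasurable.aestronglyMeasurable hx) ?_ (integrable_const _) ?_
    · intro x _
      refine (ae_restrict_iff' measurableSet_Icc).2 (Eventually.of_forall fun y hy => ?_)
      rw [Real.norm_eq_abs, abs_mul]
      exact mul_le_mul (hB x y) (hb y hy) (abs_nonneg _) ((abs_nonneg _).trans (hB x y))
    · refine Eventually.of_forall fun y => Continuous.continuousOn ?_
      exact (hKc.comp (by fun_prop : Continuous fun x : ℝ => (x, y))).mul continuous_const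
  have heq : cv J L f = S.piecewise (cv J L f) 0 := by
    ext x
    by_cases hx : x ∈ S
    · simp [hx]
    · rw [piecewise_eq_of_notMem _ _ _ hx]
      exact integral_undef fun h => hx h.aestronglyMeasurable.aemeasurable
  rw [heq]
  exact hcont.measurable_piecewise continuousOn_const hSc.measurableSet

end kernel

/-! ### Estimates for tanh -/

section tanh

lemma tanh_hasDerivAt (x : ℝ) : HasDerivAt Real.tanh (1 - Real.tanh x ^ 2) x := by
  have hc : Real.cosh x ≠ 0 := (Real.cosh_pos x).ne'
  have h := (Real.hasDerivAt_sinh x).div (Real.hasDerivAt_cosh x) hc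
  have e : Real.tanh = fun x => Real.sinh x / Real.cosh x := by
    ext y; exact Real.tanh_eq_sinh_div_cosh y
  rw [e]
  refine h.congr_deriv ?_
  field_simp

lemma tanh_smono : StrictMono Real.tanh :=
  strictMono_of_hasDerivAt_pos tanh_hasDerivAt fun x => by linarith [Real.tanh_sq_lt_one x]

lemma tanh_cont : Continuous Real.tanh :=
  continuous_iff_continuousAt.2 fun x => (tanh_hasDerivAt x).continuousAt

/-- Deviation of `tanh` from the linear map of slope `1 - m²` between two points at which `tanh` is
`κ`-close to `m`. -/
lemma tanh_lin {s t m κ : ℝ} (hm : |m| ≤ 1) (hs : |Real.tanh s - m| ≤ κ)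
    (ht : |Real.tanh t - m| ≤ κ) :
    |Real.tanh s - Real.tanh t - (1 - m ^ 2) * (s - t)| ≤ 2 * κ * |s - t| := by
  have key := Convex.norm_image_sub_le_of_norm_hasDerivWithin_le
    (f := fun x => Real.tanh x - (1 - m ^ 2) * x) (f' := fun x => 1 - Real.tanh x ^ 2 - (1 - m ^ 2))
    (s := uIcc t s) (x := t) (y := s) (C := 2 * κ) ?_ ?_ (convex_uIcc _ _) left_mem_uIcc
    right_mem_uIcc
  · simp only [Real.norm_eq_abs] at key
    convert key using 2
    ring
  · intro x _
    have := (tanh_hasDerivAt x).sub ((hasDerivAt_id x).const_mul (1 - m ^ 2))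
    simp only [mul_one] at this
    exact this.hasDerivWithinAt
  · intro x hx
    have hx1 : |Real.tanh x - m| ≤ κ := by
      rw [abs_le] at *
      rcases mem_uIcc.1 hx with h | h
      · constructor <;> linarith [tanh_smono.monotone h.1, tanh_smono.monotone h.2]
      · constructor <;> linarith [tanh_smono.monotone h.1, tanh_smono.monotone h.2]
    have hx2 : |m + Real.tanh x| ≤ 2 :=
      (abs_add_le _ _).trans (by linarith [(Real.abs_tanh_lt_one x).le])
    have : 1 - Real.tanh x ^ 2 - (1 - m ^ 2) = (m + Real.tanh x) * -(Real.tanh x - m) := by ring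
    rw [this, Real.norm_eq_abs, abs_mul, abs_neg]
    exact mul_le_mul hx2 hx1 (abs_nonneg _) (by norm_num)

lemma tanh_lip_of_ge {s t r : ℝ} (hr : 0 ≤ r) (hs : r ≤ s) (ht : r ≤ t) :
    |Real.tanh s - Real.tanh t| ≤ (1 - Real.tanh r ^ 2) * |s - t| := by
  have key := Convex.norm_image_sub_le_of_norm_hasDerivWithin_le
    (f := Real.tanh) (f' := fun x => 1 - Real.tanh x ^ 2)
    (s := Ici r) (x := t) (y := s) (C := 1 - Real.tanh r ^ 2)
    (fun x _ => (tanh_hasDerivAt x).hasDerivWithinAt) ?_ (convex_Ici _) ht hs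
  · exact key
  · intro x hx
    have h1 : Real.tanh r ≤ Real.tanh x := tanh_smono.monotone hx
    have h0 : 0 ≤ Real.tanh r := by rw [← Real.tanh_zero]; exact tanh_smono.monotone hr
    rw [Real.norm_eq_abs, abs_of_nonneg (by linarith [Real.tanh_sq_lt_one x])]
    nlinarith

lemma tanh_lip (s t : ℝ) : |Real.tanh s - Real.tanh t| ≤ |s - t| := by
  have key := Convex.norm_image_sub_le_of_norm_hasDerivWithin_le
    (f := Real.tanh) (f' := fun x => 1 - Real.tanh x ^ 2)
    (s := univ) (x := t) (y := s) (C := 1)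
    (fun x _ => (tanh_hasDerivAt x).hasDerivWithinAt) ?_ convex_univ trivial trivial
  · simpa using key
  · intro x _
    rw [Real.norm_eq_abs, abs_of_nonneg (by linarith [Real.tanh_sq_lt_one x])]
    nlinarith [sq_nonneg (Real.tanh x)]

lemma tanh_half_log {β m : ℝ} (hβ : 0 < β) (h1 : -1 < m) (h2 : m < 1) :
    Real.tanh (β * ((2 * β)⁻¹ * Real.log ((1 + m) / (1 - m)))) = m := by
  have h := Real.tanh_artanh (x := m) ⟨h1, h2⟩
  rw [Real.artanh_eq_half_log ⟨h1.le, h2.le⟩] at h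
  rw [← h]
  congr 1
  rw [h]
  field_simp

end tanh

/-! ### Profiles with contracting linearization -/

/-- Linearization at `m0`: `A φ = χ(m0) · (J^neum * φ)`. -/
noncomputable def Alin (β : ℝ) (J : ℝ → ℝ) (L : ℝ) (m0 : ℝ → ℝ) (φ : ℝ → ℝ) : ℝ → ℝ :=
  fun x => chi β (m0 x) * cv J L φ x

/-- A profile `m0` on `[-L, L]` whose linearization has an `n`-th power that contracts odd
functions by the factor `θ`. -/
structure Core (β : ℝ) (J : ℝ → ℝ) (L : ℝ) (n : ℕ) (θ : ℝ) (m0 : ℝ → ℝ) : Prop where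
  hβ : 1 < β
  hJ : KernelJ J
  hL : 1 ≤ L
  adm : Adm L m0
  bd : Bd L m0 1
  contr : ∀ (φ : ℝ → ℝ) (M : ℝ), Adm L φ → Bd L φ M → Bd L ((Alin β J L m0)^[n] φ) (θ * M)

lemma Adm.sub {L : ℝ} {f g : ℝ → ℝ} (hf : Adm L f) (hg : Adm L g) :
    Adm L (fun x => f x - g x) :=
  ⟨fun x => by simp only [hf.1 x, hg.1 x]; ring, hf.2.sub hg.2⟩

lemma Bd.sub {L M N : ℝ} {f g : ℝ → ℝ} (hf : Bd L f M) (hg : Bd L g N) :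
    Bd L (fun x => f x - g x) (M + N) :=
  fun x hx => (abs_sub _ _).trans (add_le_add (hf x hx) (hg x hx))

lemma chi_abs_le {β m : ℝ} (hβ : 0 < β) (hm : |m| ≤ 1) : |chi β m| ≤ β := by
  have : m ^ 2 ≤ 1 := by rw [← sq_abs]; exact pow_le_one₀ (abs_nonneg _) hm
  unfold chi
  rw [abs_mul, abs_of_pos hβ, abs_of_nonneg (by linarith)]
  nlinarith [sq_nonneg m]

lemma Bd.nonneg {L M : ℝ} (hL : 1 ≤ L) {f : ℝ → ℝ} (hf : Bd L f M) : 0 ≤ M :=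
  (abs_nonneg _).trans (hf 0 ⟨by linarith, by linarith⟩)

/-- A bound that improves itself affinely with ratio `q < 1` is at most the fixed point `E/(1-q)`. -/
lemma bd_of_improve {L q E M : ℝ} (hL : 1 ≤ L) {φ : ℝ → ℝ} (hq : q < 1)
    (hM : Bd L φ M) (h : ∀ B, Bd L φ B → Bd L φ (q * B + E)) : Bd L φ (E / (1 - q)) := by
  set S := (fun x => |φ x|) '' Icc (-L) L with hS
  have hne : S.Nonempty := ⟨_, mem_image_of_mem _ (⟨by linarith, by linarith⟩ : (0:ℝ) ∈ Icc (-L) L)⟩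
  have hbdd : BddAbove S := ⟨M, by rintro _ ⟨x, hx, rfl⟩; exact hM x hx⟩
  have hs : Bd L φ (sSup S) := fun x hx => le_csSup hbdd (mem_image_of_mem _ hx)
  have h2 : sSup S ≤ q * sSup S + E := csSup_le hne (by
    rintro _ ⟨x, hx, rfl⟩; exact h _ hs x hx)
  have h3 : sSup S ≤ E / (1 - q) := by
    rw [le_div_iff₀ (by linarith)]; linarith
  exact fun x hx => (hs x hx).trans h3

namespace Core
variable {β : ℝ} {J : ℝ → ℝ} {L : ℝ} {n : ℕ} {θ : ℝ} {m0 : ℝ → ℝ}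

lemma A_bd (C : Core β J L n θ m0) {φ : ℝ → ℝ} {M : ℝ} (hb : Bd L φ M) :
    Bd L (Alin β J L m0 φ) (β * M) := by
  intro x hx
  unfold Alin
  rw [abs_mul]
  exact mul_le_mul (chi_abs_le (by linarith [C.hβ]) (C.bd x hx)) (cv_bound' C.hJ C.hL hx hb)
    (abs_nonneg _) (by linarith [C.hβ])

lemma A_adm (C : Core β J L n θ m0) {φ : ℝ → ℝ} {M : ℝ} (hφ : Adm L φ) (hb : Bd L φ M) :
    Adm L (Alin β J L m0 φ) := by
  refine ⟨fun x => ?_, ?_⟩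
  · unfold Alin chi
    rw [C.adm.1 x, cv_odd C.hJ hφ.1 x]; ring
  · unfold Alin chi
    have h1 := C.adm.2
    have h2 := (cv_measurable C.hJ hb).aemeasurable (μ := volume.restrict (Icc (-L) L))
    fun_prop

lemma A_sub (C : Core β J L n θ m0) {φ ψ : ℝ → ℝ} {M N : ℝ} (hφ : Adm L φ) (hb : Bd L φ M)
    (hψ : Adm L ψ) (hb' : Bd L ψ N) (x : ℝ) :
    Alin β J L m0 (fun y => φ y - ψ y) x = Alin β J L m0 φ x - Alin β J L m0 ψ x := by
  unfold Alin
  rw [cv_sub C.hJ x hφ.2 hb hψ.2 hb']; ring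

lemma iter (C : Core β J L n θ m0) {φ : ℝ → ℝ} {M : ℝ} (hφ : Adm L φ) (hb : Bd L φ M) (i : ℕ) :
    Adm L ((Alin β J L m0)^[i] φ) ∧ Bd L ((Alin β J L m0)^[i] φ) (β ^ i * M) := by
  induction i with
  | zero => simpa using ⟨hφ, hb⟩
  | succ i ih =>
    rw [Function.iterate_succ_apply']
    refine ⟨C.A_adm ih.1 ih.2, ?_⟩
    have := C.A_bd ih.2
    rwa [← mul_assoc, ← pow_succ'] at this

/-- A-priori estimate: an odd `φ` with residual `φ - A φ` of size `R` satisfies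
`‖φ‖ ≤ θ‖φ‖ + n βⁿ R`. -/
lemma stab (C : Core β J L n θ m0) {φ : ℝ → ℝ} {B R : ℝ} (hφ : Adm L φ) (hb : Bd L φ B)
    (hr : Bd L (fun x => φ x - Alin β J L m0 φ x) R) : Bd L φ (θ * B + n * β ^ n * R) := by
  have hβ := C.hβ
  have hR : 0 ≤ R := hr.nonneg C.hL
  have key : ∀ i : ℕ, Bd L (fun x => φ x - (Alin β J L m0)^[i] φ x) (i * β ^ i * R) := by
    intro i
    induction i with
    | zero => intro x _; simp
    | succ i ih =>
      intro x hx
      obtain ⟨h1, h2⟩ := C.iter hφ hb i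
      have e := C.A_sub hφ hb h1 h2 x
      have h3 := C.A_bd ih x hx
      simp only [Function.iterate_succ_apply']
      have e2 : φ x - Alin β J L m0 ((Alin β J L m0)^[i] φ) x = (φ x - Alin β J L m0 φ x)
          + Alin β J L m0 (fun x => φ x - (Alin β J L m0)^[i] φ x) x := by rw [e]; ring
      rw [e2]
      refine (abs_add_le _ _).trans ((add_le_add (hr x hx) h3).trans ?_)
      have : 1 ≤ β ^ (i+1) := one_le_pow₀ hβ.le
      push_cast
      rw [pow_succ] at *
      nlinarith
  intro x hx
  have h1 := key n x hx
  have h2 := C.contr φ B hφ hb x hx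
  calc |φ x| = |(Alin β J L m0)^[n] φ x + (φ x - (Alin β J L m0)^[n] φ x)| := by ring_nf
    _ ≤ _ := abs_add_le _ _
    _ ≤ _ := add_le_add h2 h1

end Core

/-! ### Existence of the auxiliary function -/

/-- The nonlinear map whose fixed points are the auxiliary functions of `H`; it is cut off outside
`[-L, L]`. -/
noncomputable def Fmap (β : ℝ) (J : ℝ → ℝ) (L : ℝ) (H f : ℝ → ℝ) : ℝ → ℝ :=
  indicator (Icc (-L) L) fun x => Real.tanh (β * cv J L f x + β * H x)

section existence
variable {β : ℝ} {J : ℝ → ℝ} {L : ℝ} {n : ℕ} {θ : ℝ} {m0 h0 H : ℝ → ℝ}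

lemma Fmap_apply {f : ℝ → ℝ} {x : ℝ} (hx : x ∈ Icc (-L) L) :
    Fmap β J L H f x = Real.tanh (β * cv J L f x + β * H x) := indicator_of_mem hx _

lemma Fmap_bd (f : ℝ → ℝ) : Bd L (Fmap β J L H f) 1 := fun x hx => by
  rw [Fmap_apply hx]; exact (Real.abs_tanh_lt_one _).le

lemma Fmap_adm (hJ : KernelJ J) {f : ℝ → ℝ} (hf : Adm L f) (hb : Bd L f 1)
    (hHo : ∀ x ∈ Icc (-L) L, H (-x) = - H x)
    (hHm : AEMeasurable H (volume.restrict (Icc (-L) L))) : Adm L (Fmap β J L H f) := by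
  refine ⟨fun x => ?_, ?_⟩
  · by_cases hx : x ∈ Icc (-L) L
    · have hx' : -x ∈ Icc (-L) L := ⟨by linarith [hx.2], by linarith [hx.1]⟩
      rw [Fmap_apply hx, Fmap_apply hx', hHo x hx, cv_odd hJ hf.1 x, ← Real.tanh_neg]
      congr 1; ring
    · have hx' : -x ∉ Icc (-L) L := fun h => hx ⟨by linarith [h.2], by linarith [h.1]⟩
      unfold Fmap
      rw [indicator_of_notMem hx, indicator_of_notMem hx', neg_zero]
  · unfold Fmap
    refine AEMeasurable.indicator ?_ measurableSet_Icc
    have h2 := (cv_measurable hJ hb).aemeasurable (μ := volume.restrict (Icc (-L) L))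
    have h3 := tanh_cont.measurable
    exact h3.comp_aemeasurable ((h2.const_mul β).add (hHm.const_mul β))

/-- If the profile `m0` solves the fixed point equation with field `h0` and its linearization
contracts odd functions, then the equation has an odd solution for every odd field within `δ` of
`h0`. The solution is the limit of the Picard iteration started from `m0`, whose increments decay
geometrically. -/
lemma exists_aux {β : ℝ} (hβ : 1 < β) {n : ℕ} (hn : 1 ≤ n) {θ : ℝ} (hθ0 : 0 ≤ θ) (hθ1 : θ < 1) :
    ∃ δ > 0, ∀ (J : ℝ → ℝ) (L : ℝ) (m0 h0 H : ℝ → ℝ), Core β J L n θ m0 →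
      (∀ x ∈ Icc (-L) L, m0 x = Real.tanh (β * cv J L m0 x + β * h0 x)) →
      (∀ x ∈ Icc (-L) L, H (-x) = - H x) →
      AEMeasurable H (volume.restrict (Icc (-L) L)) →
      (∀ x ∈ Icc (-L) L, |H x - h0 x| ≤ δ) →
      ∃ m : ℝ → ℝ, OddFn m ∧
        ∀ x ∈ Icc (-L) L, m x = Real.tanh (β * cv J L m x + β * H x) := by
  have hβ0 : 0 < β := by linarith
  have hn0 : (0:ℝ) < n := by exact_mod_cast hn
  have hn1 : (1:ℝ) ≤ n := by exact_mod_cast hn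
  have hP : 0 < β ^ n := by positivity
  set q : ℝ := 1 - (1 - θ) / 2 / n with hq
  have hq1 : q < 1 := by
    have : 0 < (1 - θ) / 2 / n := by apply div_pos _ hn0; linarith
    linarith
  have hq0 : 0 < q := by
    have : (1 - θ) / 2 / n ≤ (1 - θ) / 2 := div_le_self (by linarith) hn1
    linarith
  -- Bernoulli's inequality
  have hqn : (1 + θ) / 2 ≤ q ^ n := by
    have := one_add_mul_le_pow (a := q - 1) (by linarith) n
    have e : (n:ℝ) * (q - 1) = -((1 - θ) / 2) := by rw [hq]; field_simp; ring
    rw [e] at this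
    simp only [add_sub_cancel] at this
    linarith
  set ρ : ℝ := (1 - θ) / (8 * n * β ^ n * β ^ 2) with hρ
  have hρ0 : 0 < ρ := by apply div_pos; linarith; positivity
  set δ : ℝ := min ρ (ρ * (1 - q) * ((1 + θ) / 2) / (β ^ n * β)) with hδ
  have hδ0 : 0 < δ := by
    refine lt_min hρ0 (div_pos ?_ (by positivity))
    exact mul_pos (mul_pos hρ0 (by linarith)) (by linarith)
  have hδρ : δ ≤ ρ := min_le_left _ _
  set E : ℝ := β ^ n * β * δ / ((1 + θ) / 2) with hE
  have hE0 : 0 < E := by apply div_pos; positivity; linarith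
  have hEρ : E / (1 - q) ≤ ρ := by
    have : δ ≤ ρ * (1 - q) * ((1 + θ) / 2) / (β ^ n * β) := min_le_right _ _
    rw [le_div_iff₀ (by positivity)] at this
    rw [div_le_iff₀ (by linarith), hE, div_le_iff₀ (by linarith)]
    linarith
  refine ⟨δ, hδ0, fun J L m0 h0 H C hm0 hHo hHm hH => ?_⟩
  set f : ℕ → ℝ → ℝ := fun i => (Fmap β J L H)^[i] m0 with hf
  have hfs : ∀ i, f (i+1) = Fmap β J L H (f i) := fun i => Function.iterate_succ_apply' _ _ _
  have hfb : ∀ i, Bd L (f i) 1 := by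
    intro i
    cases i with
    | zero => exact C.bd
    | succ i => rw [hfs]; exact Fmap_bd _
  have hfa : ∀ i, Adm L (f i) := by
    intro i
    induction i with
    | zero => exact C.adm
    | succ i ih => rw [hfs]; exact Fmap_adm C.hJ ih (hfb i) hHo hHm
  set d : ℕ → ℝ → ℝ := fun i x => f (i+1) x - f i x with hd
  have hda : ∀ i, Adm L (d i) := fun i => (hfa (i+1)).sub (hfa i)
  have hdcv : ∀ i x, cv J L (d i) x = cv J L (f (i+1)) x - cv J L (f i) x := fun i x =>
    cv_sub C.hJ x (hfa (i+1)).2 (hfb (i+1)) (hfa i).2 (hfb i)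
  have hfx : ∀ i, ∀ x ∈ Icc (-L) L, f (i+1) x = Real.tanh (β * cv J L (f i) x + β * H x) := by
    intro i x hx; rw [hfs, Fmap_apply hx]
  have hd0 : Bd L (d 0) (β * δ) := by
    intro x hx
    have e : d 0 x = Real.tanh (β * cv J L m0 x + β * H x)
        - Real.tanh (β * cv J L m0 x + β * h0 x) := by
      rw [← hm0 x hx, hd]; simp only; rw [hfx 0 x hx]; rfl
    rw [e]
    refine (tanh_lip _ _).trans ?_
    have e2 : β * cv J L m0 x + β * H x - (β * cv J L m0 x + β * h0 x) = β * (H x - h0 x) := by ring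
    rw [e2, abs_mul, abs_of_pos hβ0]
    exact mul_le_mul_of_nonneg_left (hH x hx) hβ0.le
  have hdiff : ∀ i x, β * cv J L (f (i+1)) x + β * H x - (β * cv J L (f i) x + β * H x)
      = β * cv J L (d i) x := fun i x => by rw [hdcv]; ring
  have hdstep : ∀ i b, Bd L (d i) b → Bd L (d (i+1)) (β * b) := by
    intro i b hb x hx
    have e : d (i+1) x = f (i+1+1) x - f (i+1) x := rfl
    rw [e, hfx (i+1) x hx, hfx i x hx]
    refine (tanh_lip _ _).trans ?_
    rw [hdiff, abs_mul, abs_of_pos hβ0]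
    exact mul_le_mul_of_nonneg_left (cv_bound' C.hJ C.hL hx hb) hβ0.le
  have hdpow : ∀ i j b, Bd L (d j) b → Bd L (d (j+i)) (β ^ i * b) := by
    intro i j b hb
    induction i with
    | zero => simpa using hb
    | succ i ih =>
      have := hdstep _ _ ih
      rwa [← mul_assoc, ← pow_succ'] at this
  -- one step of the iteration is the linearized step up to a relative error of order `ρ + δ`
  have hlin : ∀ j b, Bd L (fun x => f j x - m0 x) ρ → Bd L (fun x => f (j+1) x - m0 x) ρ →
      Bd L (d j) b →
      Bd L (fun x => d (j+1) x - Alin β J L m0 (d j) x) (2 * (β * (ρ + δ)) * (β * b)) := by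
    intro j b h1 h2 hb x hx
    have close : ∀ i, Bd L (fun x => f i x - m0 x) ρ →
        |Real.tanh (β * cv J L (f i) x + β * H x) - m0 x| ≤ β * (ρ + δ) := by
      intro i hi
      rw [hm0 x hx]
      refine (tanh_lip _ _).trans ?_
      have e2 : β * cv J L (f i) x + β * H x - (β * cv J L m0 x + β * h0 x)
          = β * (cv J L (fun y => f i y - m0 y) x + (H x - h0 x)) := by
        rw [cv_sub C.hJ x (hfa i).2 (hfb i) C.adm.2 C.bd]; ring
      rw [e2, abs_mul, abs_of_pos hβ0]
      refine mul_le_mul_of_nonneg_left ((abs_add_le _ _).trans ?_) hβ0.le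
      exact add_le_add (cv_bound' C.hJ C.hL hx hi) (hH x hx)
    have key := tanh_lin (C.bd x hx) (close _ h2) (close _ h1)
    rw [hdiff, ← hfx _ x hx, ← hfx _ x hx] at key
    have e : (1 - m0 x ^ 2) * (β * cv J L (d j) x) = Alin β J L m0 (d j) x := by
      unfold Alin chi; ring
    rw [e] at key
    refine key.trans ?_
    have : |β * cv J L (d j) x| ≤ β * b := by
      rw [abs_mul, abs_of_pos hβ0]
      exact mul_le_mul_of_nonneg_left (cv_bound' C.hJ C.hL hx hb) hβ0.le
    exact mul_le_mul_of_nonneg_left this (by positivity)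
  have hκ : n * β ^ n * (2 * (β * (ρ + δ)) * β) ≤ (1 - θ) / 2 := by
    have h1 : n * β ^ n * (2 * (β * (ρ + δ)) * β) ≤ n * β ^ n * (2 * (β * (ρ + ρ)) * β) := by
      gcongr
    refine h1.trans (le_of_eq ?_)
    rw [hρ]; field_simp; ring
  have hgeo : ∀ k, Bd L (d k) (E * q ^ k) := by
    intro k
    induction k using Nat.strong_induction_on with
    | _ k ih =>
    have hball : ∀ i ≤ k, Bd L (fun x => f i x - m0 x) ρ := by
      intro i hi x hx
      have e : f i x - m0 x = ∑ j ∈ Finset.range i, d j x := by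
        rw [hd]; simp only; rw [Finset.sum_range_sub (fun j => f j x)]; rfl
      simp only [e]
      calc |∑ j ∈ Finset.range i, d j x| ≤ ∑ j ∈ Finset.range i, |d j x| :=
            Finset.abs_sum_le_sum_abs _ _
        _ ≤ ∑ j ∈ Finset.range i, E * q ^ j := by
            refine Finset.sum_le_sum fun j hj => ih j ?_ x hx
            have := Finset.mem_range.1 hj; omega
        _ = E * ∑ j ∈ Finset.range i, q ^ j := by rw [Finset.mul_sum]
        _ ≤ E * (1 - q)⁻¹ := by
            gcongr
            rw [← tsum_geometric_of_lt_one hq0.le hq1]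
            exact (summable_geometric_of_lt_one hq0.le hq1).sum_le_tsum _ (fun _ _ => by positivity)
        _ ≤ ρ := by rw [← div_eq_mul_inv]; exact hEρ
    rcases lt_or_ge k n with hk | hk
    · have h1 := hdpow k 0 _ hd0
      rw [zero_add] at h1
      refine fun x hx => (h1 x hx).trans ?_
      have h2 : (1 + θ) / 2 ≤ q ^ k := hqn.trans (pow_le_pow_of_le_one hq0.le hq1.le hk.le)
      have h3 : β ^ k ≤ β ^ n := pow_le_pow_right₀ hβ.le hk.le
      calc β ^ k * (β * δ) ≤ β ^ n * (β * δ) := by gcongr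
        _ = E * ((1 + θ) / 2) := by
          rw [hE]; have : (1 + θ) ≠ 0 := by linarith
          field_simp
        _ ≤ E * q ^ k := by gcongr
    · obtain ⟨j, rfl⟩ := Nat.exists_eq_add_of_le' hk
      have hb := ih j (by omega)
      set b := E * q ^ j with hbdef
      have hb0 : 0 < b := by positivity
      have key : ∀ i ≤ n, Bd L (fun x => d (j+i) x - (Alin β J L m0)^[i] (d j) x)
          (i * β ^ i * (2 * (β * (ρ + δ)) * β) * b) := by
        intro i
        induction i with
        | zero => intro _ x _; simp
        | succ i ihi =>
          intro hi x hx
          have h1 := ihi (by omega)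
          have h2 := hdpow i j b hb
          have h3 := hlin (j+i) _ (hball _ (by omega)) (hball _ (by omega)) h2 x hx
          obtain ⟨a1, a2⟩ := C.iter (hda j) hb i
          have h4 := C.A_bd h1 x hx
          have e := C.A_sub (hda (j+i)) h2 a1 a2 x
          simp only [Function.iterate_succ_apply']
          have e2 : d (j + (i+1)) x - Alin β J L m0 ((Alin β J L m0)^[i] (d j)) x
            = (d (j+i+1) x - Alin β J L m0 (d (j+i)) x)
              + Alin β J L m0 (fun x => d (j+i) x - (Alin β J L m0)^[i] (d j) x) x := by
            rw [e, ← add_assoc]; ring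
          rw [e2]
          refine (abs_add_le _ _).trans ((add_le_add h3 h4).trans ?_)
          have p1 : β ^ i ≤ β ^ (i+1) := pow_le_pow_right₀ hβ.le (by omega)
          have p2 : β ^ i * ((2 * (β * (ρ + δ)) * β) * b)
              ≤ β ^ (i+1) * ((2 * (β * (ρ + δ)) * β) * b) := by gcongr
          push_cast
          calc _ = β ^ i * ((2 * (β * (ρ + δ)) * β) * b)
                + i * β ^ (i+1) * (2 * (β * (ρ + δ)) * β) * b := by ring
            _ ≤ _ := by linarith
      intro x hx
      have h1 := key n le_rfl x hx
      have h2 := C.contr (d j) b (hda j) hb x hx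
      calc |d (j+n) x| = |(Alin β J L m0)^[n] (d j) x
              + (d (j+n) x - (Alin β J L m0)^[n] (d j) x)| := by ring_nf
        _ ≤ _ := abs_add_le _ _
        _ ≤ θ * b + n * β ^ n * (2 * (β * (ρ + δ)) * β) * b := add_le_add h2 h1
        _ ≤ θ * b + (1 - θ) / 2 * b := by gcongr
        _ = (1 + θ) / 2 * b := by ring
        _ ≤ q ^ n * b := by gcongr
        _ = E * q ^ (j+n) := by rw [hbdef, pow_add]; ring
  have hconv : ∀ x, ∃ y, Tendsto (fun i => f i x) atTop (𝓝 y) := by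
    intro x
    by_cases hx : x ∈ Icc (-L) L
    · refine cauchySeq_tendsto_of_complete (cauchySeq_of_le_geometric q E hq1 fun i => ?_)
      rw [dist_comm, Real.dist_eq]
      exact hgeo i x hx
    · refine ⟨0, tendsto_const_nhds.congr' ?_⟩
      filter_upwards [eventually_ge_atTop 1] with i hi
      obtain ⟨i, rfl⟩ := Nat.exists_eq_add_of_le' hi
      rw [hfs]; exact (indicator_of_notMem hx _).symm
  choose m hm using hconv
  refine ⟨m, fun x => ?_, fun x hx => ?_⟩
  · refine tendsto_nhds_unique (hm (-x)) ?_
    have := (hm x).neg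
    refine this.congr fun i => ((hfa i).1 x).symm
  · obtain ⟨B, hB⟩ := K3_bdd (L := L) C.hJ
    have hcv : Tendsto (fun i => cv J L (f i) x) atTop (𝓝 (cv J L m x)) := by
      refine tendsto_integral_of_dominated_convergence (fun _ => B * 1) (fun i => ?_)
        (integrable_const _) (fun i => ?_) (Eventually.of_forall fun y => (hm y).const_mul _)
      · exact (cv_integrable C.hJ x (hfa i).2 (hfb i)).aestronglyMeasurable
      · refine (ae_restrict_iff' measurableSet_Icc).2 (Eventually.of_forall fun y hy => ?_)
        rw [Real.norm_eq_abs, abs_mul]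
        exact mul_le_mul (hB x y) (hfb i y hy) (abs_nonneg _) ((abs_nonneg _).trans (hB x y))
    refine tendsto_nhds_unique ((hm x).comp (tendsto_add_atTop_nat 1)) ?_
    have h1 := (tanh_cont.tendsto (β * cv J L m x + β * H x)).comp
      ((hcv.const_mul β).add_const (β * H x))
    exact h1.congr fun i => (hfx i x hx).symm

end existence

/-! ### Lipschitz dependence in a weighted norm -/

section weighted
variable {β : ℝ} {J : ℝ → ℝ} {L : ℝ} {n : ℕ} {θ : ℝ} {m0 : ℝ → ℝ}

/-- The slowly varying weight `e^{-s|x|}`. -/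
noncomputable def wt (s x : ℝ) : ℝ := Real.exp (-(s * |x|))

lemma wt_pos (s x : ℝ) : 0 < wt s x := Real.exp_pos _

lemma wt_cont (s : ℝ) : Continuous (wt s) := by unfold wt; fun_prop

lemma wt_le_one {s : ℝ} (hs : 0 ≤ s) (x : ℝ) : wt s x ≤ 1 := by
  unfold wt; rw [Real.exp_le_one_iff]; have := mul_nonneg hs (abs_nonneg x); linarith

lemma wt_diff {s x y : ℝ} (hs : 0 ≤ s) (h : |(|x| - |y|)| ≤ 1) :
    |wt s x - wt s y| ≤ (Real.exp s - 1) * wt s y := by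
  obtain ⟨h1, h2⟩ := abs_le.1 h
  have e : wt s x = Real.exp (s * (|y| - |x|)) * wt s y := by
    unfold wt; rw [← Real.exp_add]; congr 1; ring
  have e2 : wt s x - wt s y = (Real.exp (s * (|y| - |x|)) - 1) * wt s y := by rw [e]; ring
  rw [e2, abs_mul, abs_of_pos (wt_pos s y)]
  refine mul_le_mul_of_nonneg_right ?_ (wt_pos s y).le
  have a1 : Real.exp (s * (|y| - |x|)) ≤ Real.exp s := Real.exp_le_exp.2 (by nlinarith)
  have a2 : Real.exp (-s) ≤ Real.exp (s * (|y| - |x|)) := Real.exp_le_exp.2 (by nlinarith)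
  have a3 := Real.add_one_le_exp s
  have a4 := Real.add_one_le_exp (-s)
  rw [abs_le]; constructor <;> linarith

/-- Lipschitz dependence of the auxiliary function on the field, in the weighted sup-norm. The
weight changes by a factor at most `e^s` over the range of the kernel, so conjugating the
linearization by it is a small perturbation. -/
lemma Core.weighted (C : Core β J L n θ m0) (hn : 1 ≤ n) (hθ1 : θ < 1) {s κ W : ℝ}
    (hs : 0 ≤ s) (hκ0 : 0 ≤ κ) (hκ1 : κ ≤ 1)
    (hsmall : n * β ^ n * (2 * κ * β * Real.exp s + β * (Real.exp s - 1)) ≤ (1 - θ) / 2)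
    {M1 M2 H1 H2 : ℝ → ℝ} (h1 : Adm L M1) (h2 : Adm L M2)
    (c1 : Bd L (fun x => M1 x - m0 x) κ) (c2 : Bd L (fun x => M2 x - m0 x) κ)
    (e1 : ∀ x ∈ Icc (-L) L, M1 x = Real.tanh (β * cv J L M1 x + β * H1 x))
    (e2 : ∀ x ∈ Icc (-L) L, M2 x = Real.tanh (β * cv J L M2 x + β * H2 x))
    (hW : ∀ x ∈ Icc (-L) L, wt s x * |H1 x - H2 x| ≤ W) :
    ∀ x ∈ Icc (-L) L, wt s x * |M1 x - M2 x| ≤ 6 * n * β ^ n * β / (1 - θ) * W := by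
  have hβ := C.hβ
  have hβ0 : 0 < β := by linarith
  have b1 : Bd L M1 1 := fun x hx => by rw [e1 x hx]; exact (Real.abs_tanh_lt_one _).le
  have b2 : Bd L M2 1 := fun x hx => by rw [e2 x hx]; exact (Real.abs_tanh_lt_one _).le
  have hes : 1 ≤ Real.exp s := Real.one_le_exp hs
  set ψ : ℝ → ℝ := fun x => M1 x - M2 x with hψ
  have hψa : Adm L ψ := h1.sub h2
  have hψb : Bd L ψ 2 := fun x hx => by have := b1.sub b2 x hx; norm_num at this; exact this
  set φ : ℝ → ℝ := fun x => wt s x * ψ x with hφ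
  have hφabs : ∀ x, |φ x| = wt s x * |ψ x| := fun x => by
    rw [hφ]; simp only; rw [abs_mul, abs_of_pos (wt_pos s x)]
  have hφa : Adm L φ := by
    refine ⟨fun x => ?_, (wt_cont s).measurable.aemeasurable.mul hψa.2⟩
    have : wt s (-x) = wt s x := by unfold wt; rw [abs_neg]
    simp only [hφ, this, hψa.1 x]; ring
  have hφb : Bd L φ 2 := fun x hx => by
    rw [hφabs]
    calc wt s x * |ψ x| ≤ 1 * 2 := mul_le_mul (wt_le_one hs x) (hψb x hx) (abs_nonneg _) one_pos.le
      _ = 2 := one_mul _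
  have hW0 : 0 ≤ W := (mul_nonneg (wt_pos s 0).le (abs_nonneg _)).trans
    (hW 0 ⟨by linarith [C.hL], by linarith [C.hL]⟩)
  have himp : ∀ B, Bd L φ B → Bd L φ ((1 + θ) / 2 * B + n * β ^ n * (3 * β * W)) := by
    intro B hB
    have hB0 : 0 ≤ B := hB.nonneg C.hL
    have hr : Bd L (fun x => φ x - Alin β J L m0 φ x)
        ((2 * κ * β * Real.exp s + β * (Real.exp s - 1)) * B + 3 * β * W) := by
      intro x hx
      have w0 := wt_pos s x
      -- commutator of the weight with the convolution
      have hcomm : |wt s x * cv J L ψ x - cv J L φ x| ≤ (Real.exp s - 1) * B := by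
        have hb : Bd L (fun y => wt s x * ψ y) (wt s x * 2) := fun y hy => by
          rw [abs_mul, abs_of_pos w0]
          exact mul_le_mul_of_nonneg_left (hψb y hy) w0.le
        have e : wt s x * cv J L ψ x - cv J L φ x = cv J L (fun y => wt s x * ψ y - φ y) x := by
          rw [cv_sub C.hJ x (hψa.2.const_mul _) hb hφa.2 hφb]
          congr 1
          unfold cv
          rw [← integral_const_mul]
          congr 1; ext y; ring
        rw [e]
        refine cv_bound C.hJ C.hL hx fun y hy hK => ?_
        have hxy := (K3_supp C.hJ C.hL hx hy hK).1
        have e3 : wt s x * ψ y - φ y = (wt s x - wt s y) * ψ y := by rw [hφ]; ring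
        rw [e3, abs_mul]
        calc |wt s x - wt s y| * |ψ y| ≤ (Real.exp s - 1) * wt s y * |ψ y| :=
              mul_le_mul_of_nonneg_right (wt_diff hs hxy) (abs_nonneg _)
          _ = (Real.exp s - 1) * |φ y| := by rw [hφabs]; ring
          _ ≤ (Real.exp s - 1) * B := mul_le_mul_of_nonneg_left (hB y hy) (by linarith)
      have hcvφ : |cv J L φ x| ≤ B := cv_bound' C.hJ C.hL hx hB
      have hwcv : wt s x * |cv J L ψ x| ≤ Real.exp s * B := by
        have e0 : wt s x * |cv J L ψ x| = |wt s x * cv J L ψ x| := by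
          rw [abs_mul, abs_of_pos w0]
        rw [e0]
        have : wt s x * cv J L ψ x = (wt s x * cv J L ψ x - cv J L φ x) + cv J L φ x := by ring
        rw [this]
        exact (abs_add_le _ _).trans (by linarith)
      have hlin : |ψ x - chi β (m0 x) * (cv J L ψ x + (H1 x - H2 x))|
          ≤ 2 * κ * (β * |cv J L ψ x + (H1 x - H2 x)|) := by
        have c1' := c1 x hx
        have c2' := c2 x hx
        simp only at c1' c2'
        rw [e1 x hx] at c1'
        rw [e2 x hx] at c2'
        have key := tanh_lin (C.bd x hx) c1' c2'
        rw [← e1 x hx, ← e2 x hx] at key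
        have e : β * cv J L M1 x + β * H1 x - (β * cv J L M2 x + β * H2 x)
            = β * (cv J L ψ x + (H1 x - H2 x)) := by
          rw [hψ, cv_sub C.hJ x h1.2 b1 h2.2 b2]; ring
        rw [e, abs_mul, abs_of_pos hβ0] at key
        convert key using 2
        unfold chi; ring
      have hchi := chi_abs_le hβ0 (C.bd x hx)
      have hsum : wt s x * |cv J L ψ x + (H1 x - H2 x)| ≤ Real.exp s * B + W := by
        calc _ ≤ wt s x * (|cv J L ψ x| + |H1 x - H2 x|) :=
              mul_le_mul_of_nonneg_left (abs_add_le _ _) w0.le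
          _ ≤ _ := by rw [mul_add]; exact add_le_add hwcv (hW x hx)
      have e : φ x - Alin β J L m0 φ x
          = wt s x * (ψ x - chi β (m0 x) * (cv J L ψ x + (H1 x - H2 x)))
            + chi β (m0 x) * (wt s x * cv J L ψ x - cv J L φ x)
            + chi β (m0 x) * (wt s x * (H1 x - H2 x)) := by
        unfold Alin; rw [hφ]; ring
      simp only [e]
      have t1 : |wt s x * (ψ x - chi β (m0 x) * (cv J L ψ x + (H1 x - H2 x)))|
          ≤ 2 * κ * β * (Real.exp s * B + W) := by
        rw [abs_mul, abs_of_pos w0]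
        calc _ ≤ wt s x * (2 * κ * (β * |cv J L ψ x + (H1 x - H2 x)|)) :=
              mul_le_mul_of_nonneg_left hlin w0.le
          _ = 2 * κ * β * (wt s x * |cv J L ψ x + (H1 x - H2 x)|) := by ring
          _ ≤ _ := mul_le_mul_of_nonneg_left hsum (by positivity)
      have t2 : |chi β (m0 x) * (wt s x * cv J L ψ x - cv J L φ x)|
          ≤ β * ((Real.exp s - 1) * B) := by
        rw [abs_mul]; exact mul_le_mul hchi hcomm (abs_nonneg _) hβ0.le
      have t3 : |chi β (m0 x) * (wt s x * (H1 x - H2 x))| ≤ β * W := by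
        rw [abs_mul, abs_mul, abs_of_pos w0]
        exact mul_le_mul hchi (hW x hx) (by positivity) hβ0.le
      have t4 : κ * (β * W) ≤ 1 * (β * W) := mul_le_mul_of_nonneg_right hκ1 (by positivity)
      refine (abs_add_three _ _ _).trans ((add_le_add (add_le_add t1 t2) t3).trans ?_)
      linarith
    intro x hx
    refine (C.stab hφa hB hr x hx).trans ?_
    have := mul_le_mul_of_nonneg_right hsmall hB0
    linarith
  have fin := bd_of_improve C.hL (by linarith : (1 + θ) / 2 < 1) hφb himp
  intro x hx
  have := fin x hx
  rw [hφabs] at this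
  refine this.trans (le_of_eq ?_)
  have : (1 - θ) ≠ 0 := by linarith
  have h' : 1 - (1 + θ) / 2 = (1 - θ) / 2 := by ring
  rw [h']
  field_simp
  ring

end weighted

/-! ### The macroscopic profile -/

section profile_sol

lemma chi_mβ_lt {β mβ : ℝ} (hβ : 1 < β) (hm0 : 0 < mβ) (hm : mβ = Real.tanh (β * mβ)) :
    β * (1 - mβ ^ 2) < 1 := by
  set t := β * mβ with ht
  have ht0 : 0 < t := by positivity
  have hs : t < Real.sinh t := Real.self_lt_sinh_iff.2 ht0
  have hc : 1 ≤ Real.cosh t := Real.one_le_cosh t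
  have hsq := Real.cosh_sq t
  have hmc : mβ * Real.cosh t = Real.sinh t := by
    rw [hm, Real.tanh_eq_sinh_div_cosh]; field_simp
  have h1 : (1 - mβ ^ 2) * Real.cosh t ^ 2 = 1 := by
    have : (1 - mβ ^ 2) * Real.cosh t ^ 2 = Real.cosh t ^ 2 - (mβ * Real.cosh t) ^ 2 := by ring
    rw [this, hmc, hsq]; ring
  have h2 : t < mβ * Real.cosh t ^ 2 := by
    have : mβ * Real.cosh t ^ 2 = Real.sinh t * Real.cosh t := by rw [← hmc]; ring
    rw [this]; nlinarith
  have h3 : β < Real.cosh t ^ 2 := by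
    exact lt_of_mul_lt_mul_left (by linarith : mβ * β < mβ * Real.cosh t ^ 2) hm0.le
  have h4 : 0 < 1 - mβ ^ 2 := by
    by_contra h
    have := mul_nonpos_of_nonpos_of_nonneg (not_lt.1 h) (sq_nonneg (Real.cosh t))
    linarith
  nlinarith

/-- The stable branch of `x = tanh(β(x+h))` above `m_β` is Lipschitz in `h`. -/
lemma branch_lip {β mβ x y h k : ℝ} (hβ : 1 < β) (hm0 : 0 < mβ) (hm : mβ = Real.tanh (β * mβ))
    (hx : mβ ≤ x) (hy : mβ ≤ y) (hh : 0 ≤ h) (hk : 0 ≤ k)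
    (ex : x = Real.tanh (β * (x + h))) (ey : y = Real.tanh (β * (y + k))) :
    |x - y| ≤ β * (1 - mβ ^ 2) / (1 - β * (1 - mβ ^ 2)) * |h - k| := by
  have hc := chi_mβ_lt hβ hm0 hm
  have hβ0 : 0 < β := by linarith
  have key := tanh_lip_of_ge (r := β * mβ) (s := β * (x + h)) (t := β * (y + k)) (by positivity)
    (by gcongr; linarith) (by gcongr; linarith)
  rw [← ex, ← ey, ← hm] at key
  have e : β * (x + h) - β * (y + k) = β * ((x - y) + (h - k)) := by ring
  rw [e, abs_mul, abs_of_pos hβ0] at key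
  have h1 : mβ < 1 := by rw [hm]; exact Real.tanh_lt_one _
  have hc0 : 0 ≤ β * (1 - mβ ^ 2) := by
    have : mβ ^ 2 ≤ 1 := by nlinarith
    apply mul_nonneg hβ0.le; linarith
  have h2 : |x - y| ≤ β * (1 - mβ ^ 2) * (|x - y| + |h - k|) := by
    refine key.trans ?_
    have := mul_le_mul_of_nonneg_left (abs_add_le (x - y) (h - k)) hc0
    linarith
  rw [div_mul_eq_mul_div, le_div_iff₀ (by linarith)]
  linarith

/-- Regularity of the macroscopic profile. Measurability of `u` is not assumed: where the integral
takes a junk value the profile equals `m_β`, and elsewhere it is Lipschitz. -/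
lemma profile_reg {β mβ j ℓ : ℝ} {u : ℝ → ℝ} (hβ : 1 < β) (hm0 : 0 < mβ)
    (hm : mβ = Real.tanh (β * mβ)) (hj : j < 0) (hℓ : 0 < ℓ) (hu : MacroSol β mβ j ℓ u) :
    u 0 = mβ ∧ ∃ Q ≥ 0, ∀ r ∈ Icc 0 ℓ, ∀ s ∈ Icc 0 ℓ, |u r - u s| ≤ Q * |r - s| := by
  obtain ⟨⟨b, hb1, hb⟩, heq⟩ := hu
  have hβ0 : 0 < β := by linarith
  have hc := chi_mβ_lt hβ hm0 hm
  set G : ℝ → ℝ := fun y => (-j) / chi β (u y) with hG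
  have hbpos : 0 < b := by have := hb 0 ⟨le_rfl, hℓ.le⟩; linarith
  have hb2 : 0 < 1 - b ^ 2 := by nlinarith
  set g1 := (-j) / (β * (1 - b ^ 2)) with hg1
  have hGb : ∀ y ∈ Icc 0 ℓ, 0 ≤ G y ∧ G y ≤ g1 := by
    intro y hy
    have h1 := hb y hy
    have h2 : β * (1 - b ^ 2) ≤ chi β (u y) := by
      unfold chi
      have : u y ^ 2 ≤ b ^ 2 := by apply pow_le_pow_left₀ <;> linarith
      gcongr
    have h3 : 0 < β * (1 - b ^ 2) := by positivity
    exact ⟨div_nonneg (by linarith) (by linarith), div_le_div_of_nonneg_left (by linarith) h3 h2⟩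
  have hg0 : 0 ≤ g1 := (hGb 0 ⟨le_rfl, hℓ.le⟩).1.trans (hGb 0 ⟨le_rfl, hℓ.le⟩).2
  have hint : ∀ r ∈ Icc 0 ℓ, 0 ≤ ∫ y in (0:ℝ)..r, G y := fun r hr =>
    intervalIntegral.integral_nonneg hr.1 fun y hy => (hGb y ⟨hy.1, hy.2.trans hr.2⟩).1
  set c0 := β * (1 - mβ ^ 2) / (1 - β * (1 - mβ ^ 2)) with hc0
  have hc00 : 0 ≤ c0 := by
    have h1 : mβ < 1 := by rw [hm]; exact Real.tanh_lt_one _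
    apply div_nonneg (mul_nonneg hβ0.le (by nlinarith)) (by linarith)
  have hm' : mβ = Real.tanh (β * (mβ + 0)) := by rw [add_zero]; exact hm
  have hzero : ∀ r ∈ Icc 0 ℓ, ∫ y in (0:ℝ)..r, G y = 0 → u r = mβ := by
    intro r hr h0
    have := branch_lip hβ hm0 hm (hb r hr).1 le_rfl (hint r hr) le_rfl (heq r hr) hm'
    rw [h0] at this
    simp only [sub_self, abs_zero, mul_zero] at this
    linarith [abs_nonpos_iff.1 this]
  set I : Set ℝ := {r | r ∈ Icc 0 ℓ ∧ IntervalIntegrable G volume 0 r} with hI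
  have hlipI : ∀ r ∈ I, ∀ s ∈ I, |u r - u s| ≤ c0 * g1 * |r - s| := by
    intro r hr s hs
    have h1 := branch_lip hβ hm0 hm (hb r hr.1).1 (hb s hs.1).1 (hint r hr.1) (hint s hs.1)
      (heq r hr.1) (heq s hs.1)
    rw [mul_assoc]
    refine h1.trans (mul_le_mul_of_nonneg_left ?_ hc00)
    rw [intervalIntegral.integral_interval_sub_left hr.2 hs.2]
    rw [← Real.norm_eq_abs]
    refine intervalIntegral.norm_integral_le_of_norm_le_const (E := ℝ) fun y hy => ?_
    have hy' := uIoc_subset_uIcc hy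
    have hyI : y ∈ Icc 0 ℓ := (ordConnected_Icc.uIcc_subset hs.1 hr.1) hy'
    rw [Real.norm_eq_abs, abs_of_nonneg (hGb y hyI).1]
    exact (hGb y hyI).2
  have hIoc : I.OrdConnected := by
    refine ⟨fun r hr s hs t ht => ⟨⟨hr.1.1.trans ht.1, ht.2.trans hs.1.2⟩, ?_⟩⟩
    refine hs.2.mono_set (uIcc_subset_uIcc_left ?_)
    rw [uIcc_of_le hs.1.1]
    exact ⟨hr.1.1.trans ht.1, ht.2⟩
  have hIm : MeasurableSet I := hIoc.measurableSet
  have hucont : ContinuousOn u I := by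
    have : LipschitzOnWith (Real.toNNReal (c0 * g1)) u I :=
      LipschitzOnWith.of_dist_le_mul fun r hr s hs => by
        rw [Real.coe_toNNReal _ (by positivity)]; exact hlipI r hr s hs
    exact this.continuousOn
  have hum : AEMeasurable u (volume.restrict (Icc 0 ℓ)) := by
    have hset : Icc 0 ℓ = I ∪ (Icc 0 ℓ \ I) := by
      rw [union_sdiff_cancel]; exact fun r hr => hr.1
    rw [hset, aemeasurable_union_iff]
    refine ⟨hucont.aemeasurable hIm, ?_⟩
    have hme : MeasurableSet (Icc 0 ℓ \ I) := measurableSet_Icc.diff hIm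
    refine (aemeasurable_const (b := mβ)).congr ?_
    refine (ae_restrict_iff' hme).2 (Eventually.of_forall fun r hr => ?_)
    refine (hzero r hr.1 (intervalIntegral.integral_undef fun h => hr.2 ⟨hr.1, h⟩)).symm
  have hGi : IntegrableOn G (Icc 0 ℓ) := by
    refine Integrable.of_bound (C := g1) ?_ ?_
    · have : AEMeasurable G (volume.restrict (Icc 0 ℓ)) := by
        rw [hG]; unfold chi; fun_prop
      exact this.aestronglyMeasurable
    · refine (ae_restrict_iff' measurableSet_Icc).2 (Eventually.of_forall fun y hy => ?_)
      rw [Real.norm_eq_abs, abs_of_nonneg (hGb y hy).1]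
      exact (hGb y hy).2
  have hall : ∀ r ∈ Icc 0 ℓ, r ∈ I := fun r hr => by
    refine ⟨hr, ?_⟩
    rw [intervalIntegrable_iff_integrableOn_Icc_of_le hr.1]
    exact hGi.mono_set (Icc_subset_Icc_right hr.2)
  refine ⟨hzero 0 ⟨le_rfl, hℓ.le⟩ (by simp), c0 * g1, by positivity, fun r hr s hs =>
    hlipI r (hall r hr) s (hall s hs)⟩

end profile_sol

/-! ### The glued profile m₀ -/

/-- The facts about the instanton, the macroscopic profile and the glued profile `m₀` on
`[-L, L]`, `L = ℓ / ε`, that hold for small `ε`. -/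
structure Profile (β mβ j ℓ ε b Q L : ℝ) (J mbar u m0 h0 : ℝ → ℝ) (xε ξ : ℝ) (n : ℕ) : Prop where
  hβ : 1 < β
  hJ : KernelJ J
  hj : j < 0
  hε : 0 < ε
  hεL : ε * L = ℓ
  mb_odd : OddFn mbar
  mb_cont : Continuous mbar
  mb_abs : ∀ x, |mbar x| < mβ
  mb_eq : ∀ x, mbar x = Real.tanh (β * ∫ y, J (x - y) * mbar y)
  mb_near : ∀ x, xε ≤ x → mβ - ε ≤ mbar x
  hx0 : 0 < xε
  hn : 1 ≤ n
  hξ : ξ = xε + 2 * n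
  hξL : ξ + 2 ≤ L
  hu0 : u 0 = mβ
  hQ : 0 ≤ Q
  hlip : ∀ r ∈ Icc 0 ℓ, ∀ s ∈ Icc 0 ℓ, |u r - u s| ≤ Q * |r - s|
  hb : b < 1
  hub : ∀ r ∈ Icc 0 ℓ, mβ ≤ u r ∧ u r ≤ b
  hmac : ∀ r ∈ Icc 0 ℓ, u r = Real.tanh (β * (u r + ∫ y in (0:ℝ)..r, (-j) / chi β (u y)))
  m0odd : OddFn m0
  h0odd : OddFn h0
  m0in : ∀ x ∈ Icc 0 ξ, m0 x = mbar x
  m0out : ∀ x ∈ Ioc ξ L, m0 x = u (ε * (x - ξ))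
  h0eq : ∀ x ∈ Icc (-L) L,
    h0 x = (2 * β)⁻¹ * Real.log ((1 + m0 x) / (1 - m0 x)) - convN J (-L) L m0 x

/-- Oddness reduces a bound on `[-L, L]` to one on `[0, L]`. -/
lemma bd_of_half {L M : ℝ} {f : ℝ → ℝ} (hf : ∀ x ∈ Icc (-L) L, f (-x) = -f x)
    (h : ∀ x ∈ Icc 0 L, |f x| ≤ M) : Bd L f M := by
  intro x hx
  rcases le_total 0 x with h0 | h0
  · exact h x ⟨h0, hx.2⟩
  · have := h (-x) ⟨by linarith, by linarith [hx.1]⟩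
    rwa [hf x hx, abs_neg] at this

/-- Away from the boundary the Neumann convolution is the convolution on the line. -/
lemma cv_line {J : ℝ → ℝ} {L x : ℝ} (hJ : KernelJ J) (hx : |x| < L - 1) (f : ℝ → ℝ) :
    cv J L f x = ∫ y, J (x - y) * f y := by
  unfold cv
  have h1 : ∫ y in Icc (-L) L, K3 J L x y * f y = ∫ y in Icc (-L) L, J (x - y) * f y :=
    setIntegral_congr_fun measurableSet_Icc fun y hy => by simp only [K3_near hJ hx hy]
  rw [h1]
  refine setIntegral_eq_integral_of_forall_compl_eq_zero fun y hy => ?_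
  rw [hJ.2.2.2.1 (x - y), zero_mul]
  by_contra h
  have h2 := abs_le.1 (not_lt.1 h)
  have h3 := abs_lt.1 hx
  exact hy ⟨by linarith [h2.2], by linarith [h2.1]⟩

lemma tanh_mul_inj {β x y : ℝ} (hβ : 1 < β) (h : Real.tanh (β * x) = Real.tanh (β * y)) :
    x = y :=
  mul_left_cancel₀ (by linarith : β ≠ 0) (tanh_smono.injective h)

namespace Profile
variable {β mβ j ℓ ε b Q L : ℝ} {J mbar u m0 h0 : ℝ → ℝ} {xε ξ : ℝ} {n : ℕ}

lemma hn' (P : Profile β mβ j ℓ ε b Q L J mbar u m0 h0 xε ξ n) : (1:ℝ) ≤ n := by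
  exact_mod_cast P.hn

lemma hL (P : Profile β mβ j ℓ ε b Q L J mbar u m0 h0 xε ξ n) : 1 ≤ L := by
  linarith [P.hn', P.hξ, P.hξL, P.hx0]

lemma hξ2 (P : Profile β mβ j ℓ ε b Q L J mbar u m0 h0 xε ξ n) : xε + 2 ≤ ξ := by
  linarith [P.hn', P.hξ]

lemma hℓ (P : Profile β mβ j ℓ ε b Q L J mbar u m0 h0 xε ξ n) : 0 < ℓ := by
  have := P.hεL
  have := mul_pos P.hε (by linarith [P.hL] : 0 < L)
  linarith

lemma mβb (P : Profile β mβ j ℓ ε b Q L J mbar u m0 h0 xε ξ n) : mβ ≤ b :=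
  (P.hub 0 ⟨le_rfl, P.hℓ.le⟩).1.trans (P.hub 0 ⟨le_rfl, P.hℓ.le⟩).2

lemma mβpos (P : Profile β mβ j ℓ ε b Q L J mbar u m0 h0 xε ξ n) : 0 < mβ :=
  (abs_nonneg _).trans_lt (P.mb_abs 0)

lemma scale (P : Profile β mβ j ℓ ε b Q L J mbar u m0 h0 xε ξ n) {x : ℝ} (h1 : ξ ≤ x)
    (h2 : x ≤ L) : ε * (x - ξ) ∈ Icc 0 ℓ := by
  refine ⟨mul_nonneg P.hε.le (by linarith), ?_⟩
  rw [← P.hεL]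
  exact mul_le_mul_of_nonneg_left (by linarith [P.hξ2, P.hx0]) P.hε.le

lemma m0_bd (P : Profile β mβ j ℓ ε b Q L J mbar u m0 h0 xε ξ n) : Bd L m0 b := by
  refine bd_of_half (fun x _ => P.m0odd x) fun x hx => ?_
  rcases le_or_gt x ξ with h | h
  · rw [P.m0in x ⟨hx.1, h⟩]
    exact (P.mb_abs x).le.trans P.mβb
  · rw [P.m0out x ⟨h, hx.2⟩]
    have := P.hub _ (P.scale h.le hx.2)
    rw [abs_of_nonneg (P.mβpos.le.trans this.1)]
    exact this.2

lemma m0_ge (P : Profile β mβ j ℓ ε b Q L J mbar u m0 h0 xε ξ n) {x : ℝ} (h1 : xε ≤ x)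
    (h2 : x ≤ L) : mβ - ε ≤ m0 x := by
  rcases le_or_gt x ξ with h | h
  · rw [P.m0in x ⟨by linarith [P.hx0], h⟩]
    exact P.mb_near x h1
  · rw [P.m0out x ⟨h, h2⟩]
    linarith [(P.hub _ (P.scale h.le h2)).1, P.hε]

lemma m0_ge_abs (P : Profile β mβ j ℓ ε b Q L J mbar u m0 h0 xε ξ n) {x : ℝ} (h1 : xε ≤ |x|)
    (h2 : x ∈ Icc (-L) L) : mβ - ε ≤ |m0 x| := by
  have h3 := P.m0_ge h1 (abs_le.2 h2)
  rcases abs_choice x with h | h <;> rw [h] at h3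
  · exact h3.trans (le_abs_self _)
  · rw [P.m0odd] at h3
    exact h3.trans (neg_le_abs _)

/-- The values of `m₀` right of `x_ε` are within `ε` of the Lipschitz function
`u(ε (x - ξ)⁺)`. -/
lemma m0_near (P : Profile β mβ j ℓ ε b Q L J mbar u m0 h0 xε ξ n) {x : ℝ} (h1 : xε ≤ x)
    (h2 : x ≤ L) : |m0 x - u (ε * (max x ξ - ξ))| ≤ ε := by
  rcases le_or_gt x ξ with h | h
  · rw [P.m0in x ⟨by linarith [P.hx0], h⟩, max_eq_right h, sub_self, mul_zero, P.hu0, abs_le]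
    have := P.mb_near x h1
    have := (abs_lt.1 (P.mb_abs x)).2
    constructor <;> linarith [P.hε]
  · rw [P.m0out x ⟨h, h2⟩, max_eq_left h.le, sub_self, abs_zero]
    exact P.hε.le

lemma u_lip (P : Profile β mβ j ℓ ε b Q L J mbar u m0 h0 xε ξ n) {x y : ℝ}
    (hx : x ≤ L) (hy : y ≤ L) :
    |u (ε * (max x ξ - ξ)) - u (ε * (max y ξ - ξ))| ≤ Q * (ε * |x - y|) := by
  have hξ : ξ ≤ L := by linarith [P.hξL]
  refine (P.hlip _ (P.scale (le_max_right _ _) (max_le hx hξ)) _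
    (P.scale (le_max_right _ _) (max_le hy hξ))).trans (mul_le_mul_of_nonneg_left ?_ P.hQ)
  rw [← mul_sub, abs_mul, abs_of_pos P.hε]
  refine mul_le_mul_of_nonneg_left ?_ P.hε.le
  rw [sub_sub_sub_cancel_right]
  exact abs_max_sub_max_le_abs x y ξ

lemma m0_meas (P : Profile β mβ j ℓ ε b Q L J mbar u m0 h0 xε ξ n) :
    AEMeasurable m0 (volume.restrict (Icc (-L) L)) := by
  have hξL := P.hξL
  have hξ0 : 0 < ξ := by linarith [P.hξ2, P.hx0]
  have hv : ContinuousOn (fun x => u (ε * (max x ξ - ξ))) (Iic L) := by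
    have : LipschitzOnWith (Real.toNNReal (Q * ε)) (fun x => u (ε * (max x ξ - ξ))) (Iic L) :=
      LipschitzOnWith.of_dist_le_mul fun r hr s hs => by
        rw [Real.coe_toNNReal _ (mul_nonneg P.hQ P.hε.le), mul_assoc]
        exact P.u_lip hr hs
    exact this.continuousOn
  have hR : AEMeasurable m0 (volume.restrict (Ioc ξ L)) := by
    refine ((hv.mono fun x hx => hx.2).aemeasurable measurableSet_Ioc).congr ?_
    refine (ae_restrict_iff' measurableSet_Ioc).2 (Eventually.of_forall fun x hx => ?_)
    simp only [P.m0out x hx, max_eq_left hx.1.le]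
  have hLf : AEMeasurable m0 (volume.restrict (Ico (-L) (-ξ))) := by
    have hc : ContinuousOn (fun x => -u (ε * (max (-x) ξ - ξ))) (Ico (-L) (-ξ)) := by
      refine (hv.comp continuous_neg.continuousOn fun x hx => ?_).neg
      simp only [mem_Iic]; linarith [hx.1]
    refine (hc.aemeasurable measurableSet_Ico).congr ?_
    refine (ae_restrict_iff' measurableSet_Ico).2 (Eventually.of_forall fun x hx => ?_)
    have h1 := P.m0out (-x) ⟨by linarith [hx.2], by linarith [hx.1]⟩
    rw [P.m0odd] at h1
    simp only [max_eq_left (by linarith [hx.2] : ξ ≤ -x), ← h1, neg_neg]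
  have hM : AEMeasurable m0 (volume.restrict (Icc (-ξ) ξ)) := by
    refine P.mb_cont.aemeasurable.congr ?_
    refine (ae_restrict_iff' measurableSet_Icc).2 (Eventually.of_forall fun x hx => ?_)
    rcases le_total 0 x with h | h
    · exact (P.m0in x ⟨h, hx.2⟩).symm
    · have := P.m0in (-x) ⟨by linarith, by linarith [hx.1]⟩
      rw [P.m0odd, P.mb_odd] at this
      exact (neg_injective this).symm
  have hU := (aemeasurable_union_iff.2 ⟨aemeasurable_union_iff.2 ⟨hLf, hM⟩, hR⟩)
  refine hU.mono_measure (Measure.restrict_mono (fun x hx => ?_) le_rfl)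
  rcases lt_or_ge x (-ξ) with h | h
  · exact Or.inl (Or.inl ⟨hx.1, h⟩)
  · rcases le_or_gt x ξ with h' | h'
    · exact Or.inl (Or.inr ⟨h, h'⟩)
    · exact Or.inr ⟨h', hx.2⟩

lemma adm (P : Profile β mβ j ℓ ε b Q L J mbar u m0 h0 xε ξ n) : Adm L m0 := ⟨P.m0odd, P.m0_meas⟩

lemma artanh_eq (P : Profile β mβ j ℓ ε b Q L J mbar u m0 h0 xε ξ n) {x : ℝ}
    (hx : x ∈ Icc (-L) L) : Real.tanh (β * (cv J L m0 x + h0 x)) = m0 x := by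
  have h := P.m0_bd x hx
  have hβ := P.hβ
  have h2 := abs_lt.1 (h.trans_lt P.hb)
  rw [P.h0eq x hx, convN_eq_cv P.hJ P.hL hx, add_sub_cancel]
  exact tanh_half_log (by linarith) h2.1 h2.2

lemma fix (P : Profile β mβ j ℓ ε b Q L J mbar u m0 h0 xε ξ n) {x : ℝ}
    (hx : x ∈ Icc (-L) L) : m0 x = Real.tanh (β * cv J L m0 x + β * h0 x) := by
  rw [← mul_add, P.artanh_eq hx]

/-- In the instanton region `h₀` only feels the mismatch of the profiles beyond `ξ`. -/
lemma h0_in (P : Profile β mβ j ℓ ε b Q L J mbar u m0 h0 xε ξ n) {x : ℝ}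
    (hx : x ∈ Icc 0 ξ) : |h0 x| ≤ (Q + 1) * ε := by
  have hξL := P.hξL
  have hxL : |x| < L - 1 := by rw [abs_of_nonneg hx.1]; linarith [hx.2]
  have hxI : x ∈ Icc (-L) L := ⟨by linarith [hx.1, P.hL], by linarith [hx.2]⟩
  have h1 : cv J L m0 x + h0 x = cv J L mbar x := by
    apply tanh_mul_inj P.hβ
    rw [P.artanh_eq hxI, P.m0in x hx, cv_line P.hJ hxL mbar]
    exact P.mb_eq x
  have h2 : h0 x = cv J L (fun y => mbar y - m0 y) x := by
    rw [cv_sub P.hJ x P.mb_cont.aemeasurable (fun y _ => (P.mb_abs y).le) P.m0_meas P.m0_bd]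
    linarith
  rw [h2]
  refine cv_bound P.hJ P.hL hxI fun y hy hK => ?_
  have h3 := (K3_supp P.hJ P.hL hxI hy hK).1
  rw [abs_of_nonneg hx.1] at h3
  have h4 : |y| ≤ ξ + 1 := by linarith [(abs_le.1 h3).1, hx.2]
  have key : ∀ z, 0 ≤ z → z ≤ ξ + 1 → |mbar z - m0 z| ≤ (Q + 1) * ε := by
    intro z hz0 hz1
    rcases le_or_gt z ξ with h | h
    · rw [P.m0in z ⟨hz0, h⟩, sub_self, abs_zero]
      exact mul_nonneg (by linarith [P.hQ]) P.hε.le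
    · have hzL : z ≤ L := by linarith
      rw [P.m0out z ⟨h, hzL⟩]
      have e1 := P.u_lip hzL (by linarith : ξ ≤ L)
      rw [max_eq_left h.le, max_self, sub_self, mul_zero, P.hu0,
        abs_of_pos (by linarith : 0 < z - ξ)] at e1
      have e2 : Q * (ε * (z - ξ)) ≤ Q * ε := by
        refine mul_le_mul_of_nonneg_left ?_ P.hQ
        nlinarith [P.hε]
      have e3 := P.mb_near z (by linarith [P.hξ2])
      have e4 := (abs_lt.1 (P.mb_abs z)).2
      have e5 := abs_le.1 (e1.trans e2)
      rw [abs_le]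
      constructor <;> linarith [P.hε]
  rcases abs_choice y with h | h
  · rw [h] at h4
    exact key y (abs_eq_self.1 h) h4
  · have h5 := key (-y) (by rw [← h]; exact abs_nonneg y) (by rwa [← h])
    rw [P.m0odd, P.mb_odd] at h5
    rw [← abs_neg]
    convert h5 using 2
    ring

lemma h0_out (P : Profile β mβ j ℓ ε b Q L J mbar u m0 h0 xε ξ n) {x : ℝ}
    (hx : x ∈ Ioc ξ L) :
    |h0 x - ∫ y in (0:ℝ)..(ε * (x - ξ)), (-j) / chi β (u y)| ≤ (Q + 1) * ε := by
  have hxI : x ∈ Icc (-L) L := ⟨by linarith [hx.1, P.hξ2, P.hx0, P.hL], hx.2⟩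
  have hr := P.scale hx.1.le hx.2
  set r := ε * (x - ξ) with hrdef
  have h1 : cv J L m0 x + h0 x = u r + ∫ y in (0:ℝ)..r, (-j) / chi β (u y) := by
    apply tanh_mul_inj P.hβ
    rw [P.artanh_eq hxI, P.m0out x hx]
    exact P.hmac _ hr
  have h2 : h0 x - ∫ y in (0:ℝ)..r, (-j) / chi β (u y) = cv J L (fun y => u r - m0 y) x := by
    have hc : cv J L (fun _ => u r) x = u r := by
      unfold cv
      rw [integral_mul_const, K3_int P.hJ P.hL hxI, one_mul]
    rw [cv_sub P.hJ x aemeasurable_const (fun y _ => le_rfl) P.m0_meas P.m0_bd, hc]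
    linarith
  rw [h2]
  refine cv_bound P.hJ P.hL hxI fun y hy hK => ?_
  have hx1 : 1 < x := by linarith [hx.1, P.hξ2, P.hx0]
  obtain ⟨h3, h3'⟩ := K3_supp P.hJ P.hL hxI hy hK
  have hy0 := h3' hx1
  rw [abs_of_pos (by linarith : 0 < x), abs_of_nonneg hy0] at h3
  have e1 := P.m0_near (x := y) (by linarith [hx.1, P.hξ2, (abs_le.1 h3).2]) hy.2
  have e2 := P.u_lip hx.2 hy.2
  rw [max_eq_left hx.1.le, ← hrdef] at e2
  have e3 : Q * (ε * |x - y|) ≤ Q * ε := by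
    refine mul_le_mul_of_nonneg_left ?_ P.hQ
    nlinarith [P.hε]
  have e4 := abs_le.1 (e2.trans e3)
  have e5 := abs_le.1 e1
  rw [abs_le]
  constructor <;> linarith

end Profile

/-! ### Contraction of the linearization at m₀ -/

namespace Profile
variable {β mβ j ℓ ε b Q L : ℝ} {J mbar u m0 h0 : ℝ → ℝ} {xε ξ : ℝ} {n : ℕ}

lemma m0_mid (P : Profile β mβ j ℓ ε b Q L J mbar u m0 h0 xε ξ n) {x : ℝ} (hx : |x| ≤ ξ) :
    m0 x = mbar x := by
  rcases abs_choice x with h | h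
  · exact P.m0in x ⟨abs_eq_self.1 h, by rwa [← h]⟩
  · have := P.m0in (-x) ⟨by rw [← h]; exact abs_nonneg x, by rwa [← h]⟩
    rw [P.m0odd, P.mb_odd] at this
    exact neg_injective this

/-- Within the instanton region the iterates of the linearization at `m₀` are those of the
linearization at the instanton on the whole line. -/
lemma iter_near (P : Profile β mβ j ℓ ε b Q L J mbar u m0 h0 xε ξ n) (φ : ℝ → ℝ) (i : ℕ) :
    ∀ x, |x| ≤ ξ - i → (Alin β J L m0)^[i] φ x
      = (AbarOp β J mbar)^[i] ((Icc (-L) L).indicator φ) x := by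
  have hξL := P.hξL
  induction i with
  | zero =>
    intro x hx
    simp only [Nat.cast_zero, sub_zero] at hx
    have := abs_le.1 hx
    simp only [Function.iterate_zero, id]
    rw [indicator_of_mem]
    exact ⟨by linarith, by linarith⟩
  | succ i ih =>
    intro x hx
    push_cast at hx
    have hi : (0:ℝ) ≤ i := Nat.cast_nonneg i
    rw [Function.iterate_succ_apply', Function.iterate_succ_apply']
    have hx1 : |x| < L - 1 := by linarith
    simp only [Alin, AbarOp, chi]
    rw [P.m0_mid (by linarith), cv_line P.hJ hx1]
    congr 1
    refine integral_congr_ae (Eventually.of_forall fun y => ?_)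
    by_cases h : 1 < |x - y|
    · simp only [P.hJ.2.2.2.1 _ h, zero_mul]
    · simp only
      rw [ih y]
      have := abs_sub_abs_le_abs_sub y x
      rw [abs_sub_comm] at this
      linarith [not_lt.1 h]

/-- Away from the instanton region the linearization is a pointwise contraction. -/
lemma iter_far (P : Profile β mβ j ℓ ε b Q L J mbar u m0 h0 xε ξ n) {θ1 M : ℝ}
    (hθ : ∀ x ∈ Icc (-L) L, xε ≤ |x| → chi β (m0 x) ≤ θ1) {φ : ℝ → ℝ} (hφ : Bd L φ M) (i : ℕ) :
    ∀ x ∈ Icc (-L) L, xε + i ≤ |x| → |(Alin β J L m0)^[i] φ x| ≤ θ1 ^ i * M := by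
  induction i with
  | zero => intro x hx _; simpa using hφ x hx
  | succ i ih =>
    intro x hx hx1
    push_cast at hx1
    have hi : (0:ℝ) ≤ i := Nat.cast_nonneg i
    rw [Function.iterate_succ_apply', Alin, abs_mul]
    have h1 := hθ x hx (by linarith)
    have h2 : 0 ≤ chi β (m0 x) := by
      have h3 := P.m0_bd x hx
      have h4 : m0 x ^ 2 ≤ 1 := by
        rw [← sq_abs]
        exact pow_le_one₀ (abs_nonneg _) (h3.trans P.hb.le)
      exact mul_nonneg (by linarith [P.hβ]) (by linarith)
    rw [abs_of_nonneg h2]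
    have h5 : |cv J L ((Alin β J L m0)^[i] φ) x| ≤ θ1 ^ i * M := by
      refine cv_bound P.hJ P.hL hx fun y hy hK => ih y hy ?_
      have := (abs_le.1 (K3_supp P.hJ P.hL hx hy hK).1).2
      linarith
    calc chi β (m0 x) * |cv J L ((Alin β J L m0)^[i] φ) x| ≤ θ1 * (θ1 ^ i * M) :=
          mul_le_mul h1 h5 (abs_nonneg _) (h2.trans h1)
      _ = θ1 ^ (i + 1) * M := by ring

lemma core (P : Profile β mβ j ℓ ε b Q L J mbar u m0 h0 xε ξ n) {θ1 a₀ : ℝ}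
    (hθ0 : 0 ≤ θ1) (hθ1 : θ1 ≤ 1)
    (hθ : ∀ x ∈ Icc (-L) L, xε ≤ |x| → chi β (m0 x) ≤ θ1)
    (hn₀ : ∀ (ψ : ℝ → ℝ) (C : ℝ), OddFn ψ → (∀ x, |ψ x| ≤ C) →
      ∀ x, |(AbarOp β J mbar)^[n] ψ x| ≤ Real.exp (-a₀) * C) :
    Core β J L n (max (Real.exp (-a₀)) θ1) m0 := by
  refine ⟨P.hβ, P.hJ, P.hL, P.adm, fun x hx => (P.m0_bd x hx).trans P.hb.le, ?_⟩
  intro φ M hφ hM x hx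
  have hM0 : 0 ≤ M := hM.nonneg P.hL
  rcases le_total (|x|) (ξ - n) with h | h
  · rw [P.iter_near φ n x h]
    refine (hn₀ _ M ?_ ?_ x).trans (mul_le_mul_of_nonneg_right (le_max_left _ _) hM0)
    · intro y
      by_cases hy : y ∈ Icc (-L) L
      · have hy' : -y ∈ Icc (-L) L := ⟨by linarith [hy.2], by linarith [hy.1]⟩
        rw [indicator_of_mem hy, indicator_of_mem hy', hφ.1]
      · have hy' : -y ∉ Icc (-L) L := fun h' => hy ⟨by linarith [h'.2], by linarith [h'.1]⟩
        rw [indicator_of_notMem hy, indicator_of_notMem hy', neg_zero]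
    · intro y
      by_cases hy : y ∈ Icc (-L) L
      · rw [indicator_of_mem hy]; exact hM y hy
      · rw [indicator_of_notMem hy, abs_zero]; exact hM0
  · refine (P.iter_far hθ hM n x hx (by linarith [P.hξ])).trans
      (mul_le_mul_of_nonneg_right ?_ hM0)
    refine le_trans ?_ (le_max_right _ _)
    exact pow_le_of_le_one hθ0 hθ1 (by have := P.hn; omega)

end Profile

/-! ### The mobility and the integral map -/

lemma chi_inv_bd {β m b : ℝ} (hβ : 1 < β) (hb0 : 0 ≤ b) (hb : b < 1) (hm : |m| ≤ b) :
    0 < chi β m ∧ |(chi β m)⁻¹| ≤ (1 - b ^ 2)⁻¹ := by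
  have h1 : m ^ 2 ≤ b ^ 2 := by rw [← sq_abs]; exact pow_le_pow_left₀ (abs_nonneg _) hm 2
  have h2 : b ^ 2 < 1 := by nlinarith
  have h3 : 1 - b ^ 2 ≤ chi β m := by unfold chi; nlinarith
  have h4 : 0 < chi β m := by linarith
  refine ⟨h4, ?_⟩
  rw [abs_of_pos (inv_pos.2 h4)]
  exact inv_anti₀ (by linarith) h3

lemma chi_inv_lip {β m m' b : ℝ} (hβ : 1 < β) (hb0 : 0 ≤ b) (hb : b < 1) (hm : |m| ≤ b)
    (hm' : |m'| ≤ b) :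
    |(chi β m)⁻¹ - (chi β m')⁻¹| ≤ 2 * β * ((1 - b ^ 2)⁻¹) ^ 2 * |m - m'| := by
  obtain ⟨p1, q1⟩ := chi_inv_bd hβ hb0 hb hm
  obtain ⟨p2, q2⟩ := chi_inv_bd hβ hb0 hb hm'
  have e : (chi β m)⁻¹ - (chi β m')⁻¹
      = β * (m + m') * (m - m') * ((chi β m)⁻¹ * (chi β m')⁻¹) := by
    have e' : chi β m' - chi β m = β * (m + m') * (m - m') := by unfold chi; ring
    rw [← e']
    field_simp
  rw [e, abs_mul, abs_mul, abs_mul, abs_mul, abs_of_pos (by linarith : 0 < β)]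
  have h1 : |m + m'| ≤ 2 := (abs_add_le _ _).trans (by linarith)
  have h2 : |(chi β m)⁻¹| * |(chi β m')⁻¹| ≤ ((1 - b ^ 2)⁻¹) ^ 2 := by
    rw [sq]; exact mul_le_mul q1 q2 (abs_nonneg _) ((abs_nonneg _).trans q1)
  calc β * |m + m'| * |m - m'| * (|(chi β m)⁻¹| * |(chi β m')⁻¹|)
      ≤ β * 2 * |m - m'| * ((1 - b ^ 2)⁻¹) ^ 2 := by
        have : 0 < β := by linarith
        gcongr
    _ = _ := by ring

section Tmap
variable {β b L : ℝ} {M : ℝ → ℝ}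

lemma chi_inv_intble (hβ : 1 < β) (hb0 : 0 ≤ b) (hb : b < 1)
    (hM : AEMeasurable M (volume.restrict (Icc (-L) L))) (hMb : Bd L M b) {x y : ℝ}
    (hx : x ∈ Icc (-L) L) (hy : y ∈ Icc (-L) L) :
    IntervalIntegrable (fun z => (chi β (M z))⁻¹) volume x y := by
  have h : IntegrableOn (fun z => (chi β (M z))⁻¹) (Icc (-L) L) := by
    refine Integrable.of_bound (C := (1 - b ^ 2)⁻¹) ?_ ?_
    · have : AEMeasurable (fun z => (chi β (M z))⁻¹) (volume.restrict (Icc (-L) L)) := by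
        unfold chi; fun_prop
      exact this.aestronglyMeasurable
    · exact (ae_restrict_iff' measurableSet_Icc).2 (Eventually.of_forall fun z hz =>
        (chi_inv_bd hβ hb0 hb (hMb z hz)).2)
  rw [intervalIntegrable_iff]
  exact h.mono_set (uIoc_subset_uIcc.trans (ordConnected_Icc.uIcc_subset hx hy))

/-- The primitive of `1/χ(M)` is odd when `M` is odd. -/
lemma int_odd (hM : OddFn M) (x : ℝ) :
    ∫ y in (0:ℝ)..(-x), (chi β (M y))⁻¹ = -∫ y in (0:ℝ)..x, (chi β (M y))⁻¹ := by
  have h := intervalIntegral.integral_comp_neg (a := x) (b := 0) fun y => (chi β (M y))⁻¹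
  rw [neg_zero] at h
  rw [← h, intervalIntegral.integral_symm]
  congr 1
  refine intervalIntegral.integral_congr fun y _ => ?_
  simp only [hM y, chi, neg_sq]

lemma int_contOn (hβ : 1 < β) (hb0 : 0 ≤ b) (hb : b < 1) (hL : 0 ≤ L)
    (hM : AEMeasurable M (volume.restrict (Icc (-L) L))) (hMb : Bd L M b) :
    ContinuousOn (fun x => ∫ y in (0:ℝ)..x, (chi β (M y))⁻¹) (Icc (-L) L) := by
  have h0 : (0:ℝ) ∈ Icc (-L) L := ⟨by linarith, hL⟩
  have : LipschitzOnWith (Real.toNNReal ((1 - b ^ 2)⁻¹))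
      (fun x => ∫ y in (0:ℝ)..x, (chi β (M y))⁻¹) (Icc (-L) L) :=
    LipschitzOnWith.of_dist_le_mul fun r hr s hs => by
      rw [Real.coe_toNNReal _ (inv_nonneg.2 (by nlinarith)), Real.dist_eq, Real.dist_eq,
        intervalIntegral.integral_interval_sub_left (chi_inv_intble hβ hb0 hb hM hMb h0 hr)
          (chi_inv_intble hβ hb0 hb hM hMb h0 hs), ← Real.norm_eq_abs]
      refine intervalIntegral.norm_integral_le_of_norm_le_const (E := ℝ) fun y hy => ?_
      exact (chi_inv_bd hβ hb0 hb (hMb y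
        (ordConnected_Icc.uIcc_subset hs hr (uIoc_subset_uIcc hy)))).2
  exact this.continuousOn

end Tmap

/-! ### Estimates for the map T -/

/-- The integral map is close to `h₀` on profiles close to `m₀`: in the instanton region both are
small, and beyond `ξ` the integral for `m₀` reproduces the macroscopic field. -/
lemma Profile.T_close {β mβ j ℓ ε b Q L : ℝ} {J mbar u m0 h0 : ℝ → ℝ} {xε ξ : ℝ} {n : ℕ}
    (P : Profile β mβ j ℓ ε b Q L J mbar u m0 h0 xε ξ n) {b1 κ : ℝ} {M : ℝ → ℝ}
    (hbb : b ≤ b1) (hb1 : b1 < 1) (hM : Adm L M) (hMb : Bd L M b1)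
    (hMc : Bd L (fun x => M x - m0 x) κ) :
    Bd L (fun x => -(ε * j) * (∫ y in (0:ℝ)..x, (chi β (M y))⁻¹) - h0 x)
      ((Q + 1) * ε + (-j) * (1 - b1 ^ 2)⁻¹ * (ε * ξ)
        + (-j) * (2 * β * ((1 - b1 ^ 2)⁻¹) ^ 2) * κ * ℓ) := by
  have hβ := P.hβ
  have hL := P.hL
  have hj : 0 < -j := by linarith [P.hj]
  have hε := P.hε
  have hξ0 : 0 < ξ := by linarith [P.hξ2, P.hx0]
  have hξL := P.hξL
  have hb0 : 0 ≤ b1 := by linarith [P.mβb, P.mβpos]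
  have hC2 : 0 < (1 - b1 ^ 2)⁻¹ := inv_pos.2 (by nlinarith)
  have hκ : 0 ≤ κ := hMc.nonneg hL
  have hℓ := P.hℓ
  have h0I : (0:ℝ) ∈ Icc (-L) L := ⟨by linarith, by linarith⟩
  have hξI : ξ ∈ Icc (-L) L := ⟨by linarith, by linarith⟩
  have hm0b : Bd L m0 b1 := fun x hx => (P.m0_bd x hx).trans hbb
  have hin : ∀ x ∈ Icc 0 ξ, |-(ε * j) * ∫ y in (0:ℝ)..x, (chi β (M y))⁻¹|
      ≤ (-j) * (1 - b1 ^ 2)⁻¹ * (ε * ξ) := by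
    intro x hx
    have h1 : ‖∫ y in (0:ℝ)..x, (chi β (M y))⁻¹‖ ≤ (1 - b1 ^ 2)⁻¹ * |x - 0| := by
      refine intervalIntegral.norm_integral_le_of_norm_le_const (E := ℝ) fun y hy => ?_
      rw [uIoc_of_le hx.1] at hy
      exact (chi_inv_bd hβ hb0 hb1 (hMb y ⟨by linarith [hy.1], by linarith [hy.2, hx.2]⟩)).2
    rw [sub_zero, abs_of_nonneg hx.1, Real.norm_eq_abs] at h1
    have h2 : |-(ε * j)| = ε * (-j) := by
      rw [abs_of_pos] <;> nlinarith
    rw [abs_mul, h2]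
    calc ε * (-j) * |∫ y in (0:ℝ)..x, (chi β (M y))⁻¹|
        ≤ ε * (-j) * ((1 - b1 ^ 2)⁻¹ * ξ) := by
          refine mul_le_mul_of_nonneg_left (h1.trans ?_) (by positivity)
          exact mul_le_mul_of_nonneg_left hx.2 hC2.le
      _ = _ := by ring
  refine bd_of_half (fun x _ => ?_) fun x hx => ?_
  · simp only [int_odd hM.1, P.h0odd x]; ring
  rcases le_or_gt x ξ with h | h
  · have h1 := hin x ⟨hx.1, h⟩
    have h2 := P.h0_in ⟨hx.1, h⟩
    refine (abs_sub _ _).trans ?_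
    have : 0 ≤ (-j) * (2 * β * ((1 - b1 ^ 2)⁻¹) ^ 2) * κ * ℓ := by positivity
    linarith
  · have hxI : x ∈ Icc (-L) L := ⟨by linarith, hx.2⟩
    have h1 := hin ξ ⟨hξ0.le, le_rfl⟩
    have h2 := P.h0_out ⟨h, hx.2⟩
    have i1 := chi_inv_intble hβ hb0 hb1 hM.2 hMb h0I hξI
    have i2 := chi_inv_intble hβ hb0 hb1 hM.2 hMb hξI hxI
    have i3 := chi_inv_intble hβ hb0 hb1 P.m0_meas hm0b hξI hxI
    -- change of variables in the macroscopic field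
    have h3 : ∫ y in (0:ℝ)..(ε * (x - ξ)), (-j) / chi β (u y)
        = -(ε * j) * ∫ y in ξ..x, (chi β (m0 y))⁻¹ := by
      have e := intervalIntegral.mul_integral_comp_mul_sub (a := ξ) (b := x)
        (f := fun y => (-j) / chi β (u y)) ε (ε * ξ)
      rw [sub_self, ← mul_sub] at e
      rw [← e]
      have e2 : ∫ y in ξ..x, (-j) / chi β (u (ε * y - ε * ξ))
          = ∫ y in ξ..x, (-j) * (chi β (m0 y))⁻¹ := by
        refine intervalIntegral.integral_congr_ae (Eventually.of_forall fun y hy => ?_)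
        rw [uIoc_of_le h.le] at hy
        rw [P.m0out y ⟨hy.1, hy.2.trans hx.2⟩, mul_sub, div_eq_mul_inv]
      rw [e2, intervalIntegral.integral_const_mul]
      ring
    have h4 : |(∫ y in ξ..x, (chi β (M y))⁻¹) - ∫ y in ξ..x, (chi β (m0 y))⁻¹|
        ≤ 2 * β * ((1 - b1 ^ 2)⁻¹) ^ 2 * κ * (x - ξ) := by
      rw [← intervalIntegral.integral_sub i2 i3, ← Real.norm_eq_abs,
        ← abs_of_pos (sub_pos.2 h)]
      refine intervalIntegral.norm_integral_le_of_norm_le_const (E := ℝ) fun y hy => ?_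
      rw [uIoc_of_le h.le] at hy
      have hyI : y ∈ Icc (-L) L := ⟨by linarith [hy.1], hy.2.trans hx.2⟩
      exact (chi_inv_lip hβ hb0 hb1 (hMb y hyI) (hm0b y hyI)).trans
        (mul_le_mul_of_nonneg_left (hMc y hyI) (by positivity))
    have h5 : |-(ε * j) * ((∫ y in ξ..x, (chi β (M y))⁻¹) - ∫ y in ξ..x, (chi β (m0 y))⁻¹)|
        ≤ (-j) * (2 * β * ((1 - b1 ^ 2)⁻¹) ^ 2) * κ * ℓ := by
      have e : |-(ε * j)| = ε * (-j) := by
        rw [abs_of_pos] <;> nlinarith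
      rw [abs_mul, e]
      calc _ ≤ ε * (-j) * (2 * β * ((1 - b1 ^ 2)⁻¹) ^ 2 * κ * (x - ξ)) :=
            mul_le_mul_of_nonneg_left h4 (by positivity)
        _ = (-j) * (2 * β * ((1 - b1 ^ 2)⁻¹) ^ 2) * κ * (ε * (x - ξ)) := by ring
        _ ≤ _ := mul_le_mul_of_nonneg_left (P.scale h.le hx.2).2 (by positivity)
    rw [h3] at h2
    rw [← intervalIntegral.integral_add_adjacent_intervals i1 i2]
    set A := ∫ y in (0:ℝ)..ξ, (chi β (M y))⁻¹
    set B := ∫ y in ξ..x, (chi β (M y))⁻¹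
    set B' := ∫ y in ξ..x, (chi β (m0 y))⁻¹
    have e : -(ε * j) * (A + B) - h0 x
        = -(ε * j) * A + -(ε * j) * (B - B') - (h0 x - -(ε * j) * B') := by ring
    rw [e]
    refine (abs_sub _ _).trans ((add_le_add_left (abs_add_le _ _) _).trans ?_)
    linarith

/-- Integration gains a factor `1/s` in the norm with weight `e^{-s|x|}`. -/
lemma T_weighted {β b1 L s W : ℝ} {M1 M2 : ℝ → ℝ} (hβ : 1 < β) (hb0 : 0 ≤ b1) (hb1 : b1 < 1)
    (hL : 1 ≤ L) (hs : 0 < s) (h1 : Adm L M1) (h2 : Adm L M2) (c1 : Bd L M1 b1) (c2 : Bd L M2 b1)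
    (hW : ∀ x ∈ Icc (-L) L, wt s x * |M1 x - M2 x| ≤ W) :
    ∀ x ∈ Icc (-L) L, wt s x *
      |(∫ y in (0:ℝ)..x, (chi β (M1 y))⁻¹) - ∫ y in (0:ℝ)..x, (chi β (M2 y))⁻¹|
      ≤ 2 * β * ((1 - b1 ^ 2)⁻¹) ^ 2 * W / s := by
  have h0I : (0:ℝ) ∈ Icc (-L) L := ⟨by linarith, by linarith⟩
  have hC2 : 0 < (1 - b1 ^ 2)⁻¹ := inv_pos.2 (by nlinarith)
  set C := 2 * β * ((1 - b1 ^ 2)⁻¹) ^ 2 with hC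
  have hC0 : 0 < C := by have : 0 < β := by linarith
                         positivity
  have hW0 : 0 ≤ W := (mul_nonneg (wt_pos s 0).le (abs_nonneg _)).trans (hW 0 h0I)
  have hpos : ∀ x ∈ Icc 0 L, wt s x *
      |(∫ y in (0:ℝ)..x, (chi β (M1 y))⁻¹) - ∫ y in (0:ℝ)..x, (chi β (M2 y))⁻¹| ≤ C * W / s := by
    intro x hx
    have hxI : x ∈ Icc (-L) L := ⟨by linarith [hx.1], hx.2⟩
    rw [← intervalIntegral.integral_sub (chi_inv_intble hβ hb0 hb1 h1.2 c1 h0I hxI)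
      (chi_inv_intble hβ hb0 hb1 h2.2 c2 h0I hxI)]
    have key : ‖∫ y in (0:ℝ)..x, ((chi β (M1 y))⁻¹ - (chi β (M2 y))⁻¹)‖
        ≤ ∫ y in (0:ℝ)..x, C * W * Real.exp (s * y) := by
      refine intervalIntegral.norm_integral_le_of_norm_le hx.1
        (Eventually.of_forall fun y hy => ?_) (Continuous.intervalIntegrable (by fun_prop) _ _)
      have hyI : y ∈ Icc (-L) L := ⟨by linarith [hy.1], hy.2.trans hx.2⟩
      refine (chi_inv_lip hβ hb0 hb1 (c1 y hyI) (c2 y hyI)).trans ?_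
      rw [← hC, mul_assoc C W]
      refine mul_le_mul_of_nonneg_left ?_ hC0.le
      have h3 := hW y hyI
      unfold wt at h3
      rw [abs_of_pos hy.1, Real.exp_neg, inv_mul_le_iff₀ (Real.exp_pos _)] at h3
      linarith
    have hint : ∫ y in (0:ℝ)..x, C * W * Real.exp (s * y) = C * W * ((Real.exp (s * x) - 1) / s) := by
      rw [intervalIntegral.integral_const_mul, intervalIntegral.integral_comp_mul_left
        (f := fun y => Real.exp y) hs.ne', integral_exp]
      simp only [mul_zero, Real.exp_zero, smul_eq_mul]
      ring
    rw [hint, Real.norm_eq_abs] at key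
    have hw := wt_pos s x
    have hwx : wt s x * Real.exp (s * x) = 1 := by
      unfold wt; rw [abs_of_nonneg hx.1, ← Real.exp_add]; simp
    calc _ ≤ wt s x * (C * W * ((Real.exp (s * x) - 1) / s)) := mul_le_mul_of_nonneg_left key hw.le
      _ = C * W / s * (wt s x * Real.exp (s * x)) - wt s x * (C * W / s) := by ring
      _ ≤ C * W / s := by
        rw [hwx, mul_one]
        have : 0 ≤ wt s x * (C * W / s) := by positivity
        linarith
  intro x hx
  rcases le_total 0 x with h | h
  · exact hpos x ⟨h, hx.2⟩
  · have h3 := hpos (-x) ⟨by linarith, by linarith [hx.1]⟩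
    have e : wt s (-x) = wt s x := by unfold wt; rw [abs_neg]
    rw [int_odd h1.1, int_odd h2.1, e] at h3
    convert h3 using 2
    rw [← abs_neg]
    congr 1
    ring

/-! ### The iteration -/

/-- The first `N` steps of the iteration `h_{k+1} = T(h_k)` started at `h₀`, with auxiliary
functions `m_k` that stay within `κ` of `m₀`. -/
structure Orbit (β j ε L κ : ℝ) (J m0 h0 : ℝ → ℝ) (N : ℕ) (Hs Ms : ℕ → ℝ → ℝ) : Prop where
  start : ∀ x ∈ Icc (-L) L, Hs 0 x = h0 x
  odd : ∀ k < N, OddFn (Ms k)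
  near : ∀ k < N, Bd L (fun x => Ms k x - m0 x) κ
  eq : ∀ k < N, ∀ x ∈ Icc (-L) L, Ms k x = Real.tanh (β * cv J L (Ms k) x + β * Hs k x)
  step : ∀ k < N, ∀ x ∈ Icc (-L) L, Hs (k + 1) x = -(ε * j) * ∫ y in (0:ℝ)..x, (chi β (Ms k y))⁻¹

namespace Orbit
variable {β mβ j ℓ ε b Q L : ℝ} {J mbar u m0 h0 : ℝ → ℝ} {xε ξ : ℝ} {n : ℕ}
  {κ b1 : ℝ} {N : ℕ} {Hs Ms : ℕ → ℝ → ℝ}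

lemma bd (P : Profile β mβ j ℓ ε b Q L J mbar u m0 h0 xε ξ n)
    (O : Orbit β j ε L κ J m0 h0 N Hs Ms) (hb : b + κ ≤ b1) {k : ℕ} (hk : k < N) :
    Bd L (Ms k) b1 := by
  intro x hx
  have h1 := O.near k hk x hx
  have h2 := P.m0_bd x hx
  have h3 : Ms k x = (Ms k x - m0 x) + m0 x := by ring
  rw [h3]
  exact (abs_add_le _ _).trans (by linarith)

lemma step_meas (hβ : 1 < β) (hL : 1 ≤ L) (hb0 : 0 ≤ b1) (hb1 : b1 < 1)
    (O : Orbit β j ε L κ J m0 h0 N Hs Ms) {k : ℕ} (hk : k < N) (hA : Adm L (Ms k))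
    (hB : Bd L (Ms k) b1) : AEMeasurable (Hs (k + 1)) (volume.restrict (Icc (-L) L)) := by
  have h := ((int_contOn hβ hb0 hb1 (by linarith) hA.2 hB).aemeasurable
    (μ := volume) measurableSet_Icc).const_mul (-(ε * j))
  refine h.congr ((ae_restrict_iff' measurableSet_Icc).2 (Eventually.of_forall fun x hx => ?_))
  exact (O.step k hk x hx).symm

lemma adm (P : Profile β mβ j ℓ ε b Q L J mbar u m0 h0 xε ξ n)
    (O : Orbit β j ε L κ J m0 h0 N Hs Ms) (hκ : 0 ≤ κ) (hb : b + κ ≤ b1) (hb1 : b1 < 1)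
    {k : ℕ} (hk : k < N) : Adm L (Ms k) := by
  have hb0 : 0 ≤ b1 := by linarith [P.mβb, P.mβpos]
  have key : ∀ k < N, AEMeasurable (Hs k) (volume.restrict (Icc (-L) L)) → Adm L (Ms k) := by
    intro k hk hH
    refine ⟨O.odd k hk, ?_⟩
    have h1 := cv_measurable P.hJ (O.bd P hb hk)
    have h2 : AEMeasurable (fun x => Real.tanh (β * cv J L (Ms k) x + β * Hs k x))
        (volume.restrict (Icc (-L) L)) :=
      tanh_cont.measurable.comp_aemeasurable
        ((h1.aemeasurable.const_mul β).add (hH.const_mul β))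
    refine h2.congr ((ae_restrict_iff' measurableSet_Icc).2 (Eventually.of_forall fun x hx => ?_))
    exact (O.eq k hk x hx).symm
  induction k with
  | zero =>
    refine key 0 hk ?_
    have h1 := (cv_measurable P.hJ P.m0_bd).aemeasurable (μ := volume.restrict (Icc (-L) L))
    have h2 := P.m0_meas
    have h3 : AEMeasurable (fun x => (2 * β)⁻¹ * Real.log ((1 + m0 x) / (1 - m0 x)) - cv J L m0 x)
        (volume.restrict (Icc (-L) L)) :=
      ((Real.measurable_log.comp_aemeasurable
        ((h2.const_add 1).div (h2.const_sub 1))).const_mul _).sub h1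
    refine h3.congr ((ae_restrict_iff' measurableSet_Icc).2 (Eventually.of_forall fun x hx => ?_))
    simp only
    rw [O.start x hx, P.h0eq x hx, convN_eq_cv P.hJ P.hL hx]
  | succ k ih =>
    have hk' : k < N := by omega
    exact key (k + 1) hk (O.step_meas P.hβ P.hL hb0 hb1 hk' (ih hk') (O.bd P hb hk'))

/-- Contraction by `1/2` in the weighted norm: the auxiliary function is Lipschitz in the field
and the integration gains the reciprocal of the rate `K` of the weight. -/
lemma contract (P : Profile β mβ j ℓ ε b Q L J mbar u m0 h0 xε ξ n)
    (O : Orbit β j ε L κ J m0 h0 N Hs Ms) (hκ : 0 ≤ κ) (hκ1 : κ ≤ 1) (hb : b + κ ≤ b1)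
    (hb1 : b1 < 1) {θ K : ℝ} (C : Core β J L n θ m0) (hθ1 : θ < 1) (hK : 0 < K)
    (hKl : 2 * ((-j) * (2 * β * ((1 - b1 ^ 2)⁻¹) ^ 2) * (6 * n * β ^ n * β / (1 - θ))) ≤ K)
    (hsmall : n * β ^ n * (2 * κ * β * Real.exp (K * ε) + β * (Real.exp (K * ε) - 1))
      ≤ (1 - θ) / 2) {D : ℝ} (hD : ∀ x ∈ Icc (-L) L, |Hs 1 x - Hs 0 x| ≤ D) {k : ℕ} (hk : k < N) :
    ∀ x ∈ Icc (-L) L, wt (K * ε) x * |Hs (k + 1) x - Hs k x| ≤ (1 / 2) ^ k * D := by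
  have hb0 : 0 ≤ b1 := by linarith [P.mβb, P.mβpos]
  have hs : 0 < K * ε := mul_pos hK P.hε
  have hj : 0 < -j := by linarith [P.hj]
  have hL := P.hL
  have hD0 : 0 ≤ D := (abs_nonneg _).trans (hD 0 ⟨by linarith, by linarith⟩)
  induction k with
  | zero =>
    intro x hx
    rw [pow_zero, one_mul]
    calc _ ≤ 1 * |Hs 1 x - Hs 0 x| :=
          mul_le_mul_of_nonneg_right (wt_le_one hs.le x) (abs_nonneg _)
      _ ≤ D := by rw [one_mul]; exact hD x hx
  | succ k ih =>
    intro x hx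
    have hk' : k < N := by omega
    have A1 := O.adm P hκ hb hb1 hk
    have A2 := O.adm P hκ hb hb1 hk'
    have hw := C.weighted P.hn hθ1 hs.le hκ hκ1 hsmall A1 A2 (O.near _ hk) (O.near _ hk')
      (O.eq _ hk) (O.eq _ hk') (ih hk')
    have ht := T_weighted P.hβ hb0 hb1 hL hs A1 A2 (O.bd P hb hk) (O.bd P hb hk') hw x hx
    rw [O.step _ hk x hx, O.step _ hk' x hx, ← mul_sub, abs_mul,
      abs_of_pos (by nlinarith [P.hε] : 0 < -(ε * j))]
    set X := |(∫ y in (0:ℝ)..x, (chi β (Ms (k + 1) y))⁻¹) - ∫ y in (0:ℝ)..x, (chi β (Ms k y))⁻¹|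
    set C3 := 2 * β * ((1 - b1 ^ 2)⁻¹) ^ 2
    set Cw := 6 * n * β ^ n * β / (1 - θ)
    have hε := P.hε
    have hW : 0 ≤ (1 / 2 : ℝ) ^ k * D := by positivity
    calc wt (K * ε) x * (-(ε * j) * X) = -(ε * j) * (wt (K * ε) x * X) := by ring
      _ ≤ -(ε * j) * (C3 * (Cw * ((1 / 2) ^ k * D)) / (K * ε)) :=
          mul_le_mul_of_nonneg_left ht (by nlinarith)
      _ = (2 * ((-j) * C3 * Cw)) * (((1 / 2) ^ k * D) / (2 * K)) := by field_simp
      _ ≤ K * (((1 / 2) ^ k * D) / (2 * K)) := mul_le_mul_of_nonneg_right hKl (by positivity)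
      _ = (1 / 2) ^ (k + 1) * D := by field_simp; ring

end Orbit

/-! ### Small ε and conclusion -/

/-- The interface width: `m_β - m̄(x_ε) = ε` and exponential convergence of the instanton force
`x_ε = O(ε^{-1/2})`. -/
lemma width_bound {ε cb ab x : ℝ} (hε : 0 < ε) (hab : 0 < ab) (hx : 0 < x)
    (h : ε ≤ cb * Real.exp (-ab * x)) : ε * x ≤ Real.sqrt (2 * cb * ε) / ab := by
  have h1 := Real.quadratic_le_exp_of_nonneg (mul_pos hab hx).le
  have h2 : (ab * x) ^ 2 / 2 ≤ Real.exp (ab * x) := by nlinarith [mul_pos hab hx]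
  have h3 : ε * Real.exp (ab * x) ≤ cb := by
    rw [neg_mul, Real.exp_neg, ← div_eq_mul_inv, le_div_iff₀ (Real.exp_pos _)] at h
    exact h
  have h4 : (ε * x * ab) ^ 2 ≤ 2 * cb * ε := by
    have : (ε * x * ab) ^ 2 = 2 * ε * (ε * ((ab * x) ^ 2 / 2)) := by ring
    rw [this]
    have h5 : ε * ((ab * x) ^ 2 / 2) ≤ cb :=
      (mul_le_mul_of_nonneg_left h2 hε.le).trans h3
    nlinarith
  rw [le_div_iff₀ hab]
  exact Real.le_sqrt_of_sq_le h4

lemma one_le_n₀ {β a₀ : ℝ} {J mbar : ℝ → ℝ} {n₀ : ℕ} (ha₀ : 0 < a₀)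
    (hn₀ : ∀ (ψ : ℝ → ℝ) (C : ℝ), OddFn ψ → (∀ x, |ψ x| ≤ C) →
      ∀ x, |(AbarOp β J mbar)^[n₀] ψ x| ≤ Real.exp (-a₀) * C) : 1 ≤ n₀ := by
  by_contra h
  have h0 : n₀ = 0 := by omega
  subst h0
  have := hn₀ Real.sign 1 (fun x => Real.sign_neg) (fun x => by
    rcases Real.sign_apply_eq x with h | h | h <;> rw [h] <;> norm_num) 1
  simp only [Function.iterate_zero, id, Real.sign_one, abs_one, mul_one] at this
  have h2 : Real.exp (-a₀) < 1 := Real.exp_lt_one_iff.2 (by linarith)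
  linarith

lemma Instanton.abs_lt {β mβ cb ab : ℝ} {J mbar mbar' : ℝ → ℝ}
    (h : Instanton β mβ cb ab J mbar mbar') (x : ℝ) : |mbar x| < mβ := by
  obtain ⟨hodd, hmono, -, -, -, -, hb⟩ := h
  have h0 : mbar 0 = 0 := by have := hodd 0; rw [neg_zero] at this; linarith
  have key : ∀ x, 0 ≤ x → |mbar x| < mβ := fun x hx => by
    rw [abs_of_nonneg (h0 ▸ hmono.monotone hx)]
    linarith [(hb x hx).1]
  rcases le_total 0 x with hx | hx
  · exact key x hx
  · have := key (-x) (by linarith)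
    rwa [hodd, abs_neg] at this

/-- On `[-L, L]` the weight is at least `e^{-Kℓ}`, uniformly in `ε`. -/
lemma remove_wt {K ε L ℓ x X D : ℝ} {k : ℕ} (hK : 0 ≤ K) (hε : 0 < ε) (hεL : ε * L = ℓ)
    (h1 : wt (K * ε) x * |X| ≤ (1 / 2) ^ k * D) (hx : x ∈ Icc (-L) L) :
    |X| ≤ Real.exp (K * ℓ) * (1 / 2) ^ k * D := by
  have h2 : 1 ≤ Real.exp (K * ℓ) * wt (K * ε) x := by
    unfold wt
    rw [← Real.exp_add]
    apply Real.one_le_exp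
    have h3 : ε * |x| ≤ ε * L := mul_le_mul_of_nonneg_left (abs_le.2 hx) hε.le
    rw [hεL] at h3
    have h4 := mul_le_mul_of_nonneg_left h3 hK
    linarith
  calc |X| = 1 * |X| := (one_mul _).symm
    _ ≤ Real.exp (K * ℓ) * wt (K * ε) x * |X| := mul_le_mul_of_nonneg_right h2 (abs_nonneg _)
    _ = Real.exp (K * ℓ) * (wt (K * ε) x * |X|) := by ring
    _ ≤ Real.exp (K * ℓ) * ((1 / 2) ^ k * D) := mul_le_mul_of_nonneg_left h1 (Real.exp_pos _).le
    _ = _ := by ring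

section Sec3
/- Section-3 (antisymmetric case) setup: `β > 1`, kernel `J`, current `j < 0`,
accuracy exponent `a ∈ (0,1)`, `ℓ < ℓ_j`, the instanton `m̄`, the macroscopic
solution `u`, and the integer `n₀` with `‖Ā^{n₀}ψ‖ ≤ e^{-a₀}‖ψ‖` on odd functions. -/
variable (β mβ j a ℓ cb ab a₀ : ℝ) (J mbar mbar' u : ℝ → ℝ) (n₀ : ℕ)

/-- Theorem 3.3: contraction along the iteration `h_k = T^k(h₀)`
with auxiliary functions `m_k`. -/
theorem stmt_6
    (hβ : 1 < β) (hmβpos : 0 < mβ) (hmβ : mβ = Real.tanh (β * mβ)) (hJ : KernelJ J)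
    (hj : j < 0) (ha : a ∈ Ioo (0:ℝ) 1) (hℓ : 0 < ℓ)
    (hcb : 0 < cb) (hab : 0 < ab)
    (hinst : Instanton β mβ cb ab J mbar mbar')
    (hu : MacroSol β mβ j ℓ u)
    (ha₀ : 0 < a₀)
    (hn₀ : ∀ (ψ : ℝ → ℝ) (C : ℝ), OddFn ψ → (∀ x, |ψ x| ≤ C) →
      ∀ x, |(AbarOp β J mbar)^[n₀] ψ x| ≤ Real.exp (-a₀) * C) :
    ∃ c > (0:ℝ), ∃ ε₀ > (0:ℝ), ∀ ε ∈ Ioo (0:ℝ) ε₀,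
      ∀ (xε ξε : ℝ) (m₀ h₀ : ℝ → ℝ),
        Sec3Data β mβ ℓ ε J mbar u m₀ h₀ xε ξε n₀ →
        ∀ (n : ℕ) (Hs Ms : ℕ → ℝ → ℝ),
          (∀ x ∈ Icc (-(ℓ/ε)) (ℓ/ε), Hs 0 x = h₀ x) →
          -- for all `k < n`: `h_k = T^k(h₀)` is well defined, with auxiliary
          -- function `m_k`, and `‖h_k - h₀‖ ≤ ε^a`, `‖m_k - m₀‖ ≤ ε^a`
          (∀ k < n, OddFn (Hs k) ∧ OddFn (Ms k) ∧
            (∀ x ∈ Icc (-(ℓ/ε)) (ℓ/ε), |Hs k x - h₀ x| ≤ ε ^ a) ∧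
            (∀ x ∈ Icc (-(ℓ/ε)) (ℓ/ε), |Ms k x - m₀ x| ≤ ε ^ a) ∧
            (∀ x ∈ Icc (-(ℓ/ε)) (ℓ/ε),
              Ms k x = Real.tanh (β * convN J (-(ℓ/ε)) (ℓ/ε) (Ms k) x + β * Hs k x)) ∧
            (∀ x ∈ Icc (-(ℓ/ε)) (ℓ/ε),
              Hs (k+1) x = -(ε*j) * ∫ y in (0:ℝ)..x, (chi β (Ms k y))⁻¹)) →
          -- then `h_n` is well defined (it has an auxiliary function) and the
          -- differences contract:
          (∃ mn : ℝ → ℝ, OddFn mn ∧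
            (∀ x ∈ Icc (-(ℓ/ε)) (ℓ/ε),
              mn x = Real.tanh (β * convN J (-(ℓ/ε)) (ℓ/ε) mn x + β * Hs n x))) ∧
          (∀ k < n, ∀ D : ℝ, 0 ≤ D →
            (∀ x ∈ Icc (-(ℓ/ε)) (ℓ/ε), |Hs 1 x - Hs 0 x| ≤ D) →
            ∀ x ∈ Icc (-(ℓ/ε)) (ℓ/ε),
              |Hs (k+1) x - Hs k x| ≤ c * (1/2) ^ k * D) := by
  have hn1 : 1 ≤ n₀ := one_le_n₀ ha₀ hn₀
  have hβ0 : 0 < β := by linarith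
  have hχ := chi_mβ_lt hβ hmβpos hmβ
  obtain ⟨hu0, Q, hQ, hlip⟩ := profile_reg hβ hmβpos hmβ hj hℓ hu
  obtain ⟨⟨b, hb, hub⟩, hmac⟩ := hu
  have hmb : mβ ≤ b := (hub 0 ⟨le_rfl, hℓ.le⟩).1.trans (hub 0 ⟨le_rfl, hℓ.le⟩).2
  have hmβ1 : mβ < 1 := by linarith
  set θ1 := (1 + β * (1 - mβ ^ 2)) / 2 with hθ1
  have hχ0 : 0 < β * (1 - mβ ^ 2) := mul_pos hβ0 (by nlinarith)
  -- the larger of the contraction factors near the interface and away from it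
  set θ := max (Real.exp (-a₀)) θ1 with hθ
  have hθlt : θ < 1 := max_lt (Real.exp_lt_one_iff.2 (by linarith)) (by linarith)
  have hθ0 : 0 ≤ θ := (Real.exp_pos _).le.trans (le_max_left _ _)
  obtain ⟨δ, hδ, hex⟩ := exists_aux hβ hn1 hθ0 hθlt
  -- a bound for all `m_k`, strictly between `sup u` and `1`
  set b1 := (1 + b) / 2 with hb1
  have hb1lt : b1 < 1 := by linarith
  have hbb1 : b < b1 := by linarith
  have hj' : 0 < -j := by linarith
  -- more than twice the product of the Lipschitz constants of `-j / χ` and of the auxiliary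
  -- function as a function of the field
  set K := 2 * ((-j) * (2 * β * ((1 - b1 ^ 2)⁻¹) ^ 2) * (6 * n₀ * β ^ n₀ * β / (1 - θ))) + 1 with hK
  have hKpos : 0 < K := by
    have : 0 < 1 - θ := by linarith
    positivity
  have hKl : 2 * ((-j) * (2 * β * ((1 - b1 ^ 2)⁻¹) ^ 2) * (6 * n₀ * β ^ n₀ * β / (1 - θ))) ≤ K := by
    linarith
  clear_value K
  -- bounds the macroscopic width `ε (ξ_ε + 2)` of the interface region
  set η : ℝ → ℝ := fun ε => Real.sqrt (2 * cb * ε) / ab + ε * (2 * n₀) + 2 * ε with hη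
  have hηc : Continuous η := by rw [hη]; fun_prop
  have hη0 : η 0 = 0 := by simp [hη]
  have hr : ContinuousAt (fun ε : ℝ => ε ^ a) 0 := Real.continuousAt_rpow_const 0 a (Or.inr ha.1.le)
  have hr0 : (0:ℝ) ^ a = 0 := Real.zero_rpow ha.1.ne'
  have E1 : ∀ᶠ ε : ℝ in 𝓝 0, ε < mβ := eventually_lt_nhds hmβpos
  have E2 : ∀ᶠ ε : ℝ in 𝓝 0, β * (1 - (mβ - ε) ^ 2) < θ1 := by
    refine (ContinuousAt.tendsto (f := fun ε : ℝ => β * (1 - (mβ - ε) ^ 2)) (x := 0)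
      (by fun_prop)).eventually_lt_const ?_
    simp only [sub_zero]; linarith
  have E3 : ∀ᶠ ε : ℝ in 𝓝 0, η ε < ℓ :=
    hηc.continuousAt.tendsto.eventually_lt_const (by rw [hη0]; exact hℓ)
  have E4 : ∀ᶠ ε : ℝ in 𝓝 0, ε ^ a < b1 - b :=
    hr.tendsto.eventually_lt_const (by simp only [hr0]; linarith)
  have E5 : ∀ᶠ ε : ℝ in 𝓝 0, n₀ * β ^ n₀ *
      (2 * ε ^ a * β * Real.exp (K * ε) + β * (Real.exp (K * ε) - 1)) < (1 - θ) / 2 := by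
    refine (ContinuousAt.tendsto (f := fun ε : ℝ => n₀ * β ^ n₀ *
      (2 * ε ^ a * β * Real.exp (K * ε) + β * (Real.exp (K * ε) - 1))) (x := 0)
      (by fun_prop)).eventually_lt_const ?_
    simp only [hr0, mul_zero, zero_mul, Real.exp_zero, sub_self, add_zero]
    linarith
  have E6 : ∀ᶠ ε : ℝ in 𝓝 0, (Q + 1) * ε + (-j) * (1 - b1 ^ 2)⁻¹ * η ε
      + (-j) * (2 * β * ((1 - b1 ^ 2)⁻¹) ^ 2) * ε ^ a * ℓ < δ := by
    have := hηc.continuousAt (x := 0)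
    refine (ContinuousAt.tendsto (f := fun ε : ℝ => (Q + 1) * ε + (-j) * (1 - b1 ^ 2)⁻¹ * η ε
      + (-j) * (2 * β * ((1 - b1 ^ 2)⁻¹) ^ 2) * ε ^ a * ℓ) (x := 0)
      (by fun_prop)).eventually_lt_const ?_
    simp only [hr0, hη0, mul_zero, zero_mul, add_zero]
    exact hδ
  obtain ⟨ε₀, hε₀, hall⟩ := Metric.eventually_nhds_iff.1
    (E1.and (E2.and (E3.and (E4.and (E5.and E6)))))
  refine ⟨Real.exp (K * ℓ), Real.exp_pos _, ε₀, hε₀, ?_⟩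
  intro ε hεI xε ξε m₀ h₀ hdata n Hs Ms hH0 hit
  obtain ⟨F1, F2, F3, F4, F5, F6⟩ := hall (y := ε) (by
    rw [Real.dist_eq, sub_zero, abs_of_pos hεI.1]; exact hεI.2)
  have hε := hεI.1
  obtain ⟨d1, d2, d3, d4, d5, d6, d7⟩ := hdata
  have hmbabs := hinst.abs_lt
  obtain ⟨hodd, hmono, hder, heq, -, -, hdec⟩ := hinst
  have hmb0 : mbar 0 = 0 := by have := hodd 0; rw [neg_zero] at this; linarith
  have hx0 : 0 < xε := by
    rw [← hmono.lt_iff_lt, hmb0, d1]; linarith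
  have hwidth := width_bound (cb := cb) hε hab hx0 (by
    have := (hdec xε hx0.le).2.1
    rw [d1] at this; linarith)
  have hεξ : ε * (ξε + 2) ≤ η ε := by
    rw [d2, hη]; simp only; linarith
  set L := ℓ / ε with hLdef
  have hεL : ε * L = ℓ := by rw [hLdef]; field_simp
  have P : Profile β mβ j ℓ ε b Q L J mbar u m₀ h₀ xε ξε n₀ := by
    refine ⟨hβ, hJ, hj, hε, hεL, hodd, ?_, hmbabs, heq, ?_, hx0, hn1, d2, ?_, hu0, hQ, hlip, hb,
      hub, hmac, d3, d4, d5, d6, d7⟩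
    · exact continuous_iff_continuousAt.2 fun x => (hder x).continuousAt
    · intro x hx
      rw [← d1]; exact hmono.monotone hx
    · rw [hLdef, le_div_iff₀ hε]; linarith
  have hκ : 0 ≤ ε ^ a := Real.rpow_nonneg hε.le a
  have hbκ : b + ε ^ a ≤ b1 := by linarith
  have hκ1 : ε ^ a ≤ 1 := by linarith [hmβpos]
  have C : Core β J L n₀ θ m₀ := by
    refine P.core (by linarith) (by linarith) ?_ hn₀
    intro x hx hxx
    have h1 := P.m0_ge_abs hxx hx
    refine le_trans ?_ F2.le
    unfold chi
    have h2 : (mβ - ε) ^ 2 ≤ m₀ x ^ 2 := by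
      rw [← sq_abs (m₀ x)]; exact pow_le_pow_left₀ (by linarith) h1 2
    gcongr
  have O : Orbit β j ε L (ε ^ a) J m₀ h₀ n Hs Ms := by
    refine ⟨hH0, fun k hk => (hit k hk).2.1, fun k hk => (hit k hk).2.2.2.1,
      fun k hk x hx => ?_, fun k hk => (hit k hk).2.2.2.2.2⟩
    rw [← convN_eq_cv hJ P.hL hx]
    exact (hit k hk).2.2.2.2.1 x hx
  refine ⟨?_, ?_⟩
  · rcases n with _ | k
    · refine ⟨m₀, d3, fun x hx => ?_⟩
      rw [convN_eq_cv hJ P.hL hx, hH0 x hx]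
      exact P.fix hx
    · have hk : k < k + 1 := Nat.lt_succ_self k
      have hA := O.adm P hκ hbκ hb1lt hk
      have hB := O.bd P hbκ hk
      obtain ⟨m, hm, hme⟩ := hex J L m₀ h₀ (Hs (k + 1)) C (fun x hx => P.fix hx)
        (fun x hx => by
          rw [O.step k hk x hx, O.step k hk (-x) ⟨by linarith [hx.2], by linarith [hx.1]⟩,
            int_odd hA.1]
          ring)
        (O.step_meas hβ P.hL (by linarith) hb1lt hk hA hB)
        (fun x hx => by
          rw [O.step k hk x hx]
          refine (P.T_close hbb1.le hb1lt hA hB (O.near k hk) x hx).trans (le_trans ?_ F6.le)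
          have : 0 < (1 - b1 ^ 2)⁻¹ := inv_pos.2 (by nlinarith)
          gcongr
          linarith)
      exact ⟨m, hm, fun x hx => by rw [convN_eq_cv hJ P.hL hx]; exact hme x hx⟩
  · intro k hk D hD0 hD x hx
    exact remove_wt hKpos.le hε hεL (O.contract P hκ hκ1 hbκ hb1lt C hθlt hKpos hKl F5.le hD hk x hx) hx

end Sec3
end
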